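/- arXiv:1906.07169 — 4 statements merged into one kernel-verified Lean document; each statement's English description precedes it below -/
import Mathlib

section
/- For every fixed integer m ≥ 1, as n → ∞, ℰ(Y_{m,n}) ∼ (n/ζ(2))^{(m+1)/2} · m! · ζ(m+1). Equivalently, Σ_{λ partition of n} Σ_j λ_j^m ∼ p(n) · (6n/π²)^{(m+1)/2} · m! · ζ(m+1). -/
open Filter Asymptotics Topology

/-!
A part `d` occurs at least `j` times in exactly `p(n - dj)` partitions of `n`, so the sum of the
`m`-th powers of all parts is `∑_j T_j(n)` with `T_j(n) = ∑_d d ^ m * p(n - dj)`. Write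
`S_m = T_1` for the `m`-th moment. As `p` is monotone, `T_j` is close to `S_m / j ^ (m + 1)`, and
summing over `j` gives `ζ(m + 1) * S_m(n)`.

For `m = 1` the sum is exactly `n * p(n)`. Dropping all terms but `j = 1` yields
`S_1(n) ≤ n * p(n)`; hence `p(n - h) ≤ p(n) / 2` once `h` is a large multiple of `√n`, and iterating
this halving gives the exponential decay that dominates the sum over `j`. Keeping all terms yields
`ζ(2) * S_1(n) ~ n * p(n)`. Since `S_1` has increments `S_0` and `S_0` has increments `p`, this is a
second order difference equation for `S_1`; multiplied by `S_0` it can be summed to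
`ζ(2) * S_1 ^ 2 ~ n * S_0 ^ 2`, so `S_0 ~ √(n / ζ(2)) * p(n)`. The binomial recurrence, in which
`S_(m + 1)` has increments `~ (m + 1) * S_m`, then gives every `S_m` by Stolz–Cesàro. The
asymptotics of `p` itself never enter.
-/

/-- `lag f n k` is `f (n - k)`, where `f` is extended by zero to negative arguments. -/
def lag (f : ℕ → ℝ) (n k : ℕ) : ℝ := if k ≤ n then f (n - k) else 0

/-- The `m`-th moment of `k ↦ f (n - k)` along the positive multiples of `j`, namely
`∑ d ^ m * f (n - d * j)` over `d ≥ 1`; the index of summation is `d - 1`. -/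
def stridedLagMoment (f : ℕ → ℝ) (m j n : ℕ) : ℝ :=
  ∑ d ∈ Finset.range n, ((d : ℝ) + 1) ^ m * lag f n ((d + 1) * j)

/-- The `m`-th moment `∑ k ^ m * f (n - k)` over `1 ≤ k ≤ n` of the values of `f` before `n`;
the index of summation is `k - 1`. -/
def lagMoment (f : ℕ → ℝ) (m n : ℕ) : ℝ :=
  ∑ k ∈ Finset.range n, ((k : ℝ) + 1) ^ m * lag f n (k + 1)

/-- The order of growth `n ^ ((m + 1) / 2) * f n` of `lagMoment f m n` when `f` varies on the
scale `√n`. -/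
noncomputable def lagMomentScale (f : ℕ → ℝ) (m n : ℕ) : ℝ := √(n : ℝ) ^ (m + 1) * f n

section Lag

variable {f : ℕ → ℝ}

lemma lag_of_lt {n k : ℕ} (h : n < k) : lag f n k = 0 := if_neg h.not_ge

lemma lag_nonneg (hf0 : ∀ n, 0 ≤ f n) (n k : ℕ) : 0 ≤ lag f n k := by
  unfold lag
  split_ifs
  exacts [hf0 _, le_rfl]

lemma lag_antitone (hf : Monotone f) (hf0 : ∀ n, 0 ≤ f n) (n : ℕ) : Antitone (lag f n) := by
  intro a b hab
  by_cases hb : b ≤ n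
  · rw [lag, lag, if_pos hb, if_pos (hab.trans hb)]
    exact hf (Nat.sub_le_sub_left hab n)
  · rw [lag_of_lt (not_le.1 hb)]
    exact lag_nonneg hf0 n a

lemma lag_add {n a : ℕ} (h : a ≤ n) (b : ℕ) : lag f n (a + b) = lag f (n - a) b := by
  simp only [lag, Nat.sub_sub, Nat.le_sub_iff_add_le' h]

lemma sum_mul_lag_eq_of_le (g : ℕ → ℝ) {n N : ℕ} (h : n ≤ N) :
    ∑ k ∈ Finset.range N, g k * lag f n (k + 1) = ∑ k ∈ Finset.range n, g k * lag f n (k + 1) := by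
  refine (Finset.sum_subset (Finset.range_mono h) fun k _ hk => ?_).symm
  rw [lag_of_lt (by simpa [Nat.lt_succ_iff] using hk), mul_zero]

lemma stridedLagMoment_one_right (f : ℕ → ℝ) (m n : ℕ) :
    stridedLagMoment f m 1 n = lagMoment f m n := by
  simp only [stridedLagMoment, lagMoment, mul_one]

lemma stridedLagMoment_nonneg (hf0 : ∀ n, 0 ≤ f n) (m j n : ℕ) : 0 ≤ stridedLagMoment f m j n :=
  Finset.sum_nonneg fun _ _ => mul_nonneg (by positivity) (lag_nonneg hf0 _ _)

lemma stridedLagMoment_eq_zero_of_lt (f : ℕ → ℝ) (m : ℕ) {j n : ℕ} (h : n < j) :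
    stridedLagMoment f m j n = 0 :=
  Finset.sum_eq_zero fun d _ => by
    rw [lag_of_lt (h.trans_le (Nat.le_mul_of_pos_left j d.succ_pos)), mul_zero]

lemma lagMoment_nonneg (hf0 : ∀ n, 0 ≤ f n) (m n : ℕ) : 0 ≤ lagMoment f m n :=
  stridedLagMoment_one_right f m n ▸ stridedLagMoment_nonneg hf0 m 1 n

lemma lagMoment_zero_right (f : ℕ → ℝ) (m : ℕ) : lagMoment f m 0 = 0 := by simp [lagMoment]

lemma lagMoment_succ (f : ℕ → ℝ) (m n : ℕ) :
    lagMoment f m (n + 1) =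
      f n + ∑ i ∈ Finset.range (m + 1), (m.choose i : ℝ) * lagMoment f i n := by
  have hlag (k : ℕ) : lag f (n + 1) (k + 1) = lag f n k := by simp [lag]
  simp only [lagMoment, hlag, Finset.mul_sum]
  rw [Finset.sum_range_succ', add_comm, Finset.sum_comm]
  congr 1
  · simp [lag]
  · refine Finset.sum_congr rfl fun k _ => ?_
    rw [Nat.cast_add_one, add_pow, Finset.sum_mul]
    exact Finset.sum_congr rfl fun i _ => by rw [one_pow]; ring

lemma lagMoment_zero_succ (f : ℕ → ℝ) (n : ℕ) :
    lagMoment f 0 (n + 1) = lagMoment f 0 n + f n := by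
  simp [lagMoment_succ, add_comm]

lemma lagMoment_one_succ (f : ℕ → ℝ) (n : ℕ) :
    lagMoment f 1 (n + 1) = lagMoment f 1 n + lagMoment f 0 (n + 1) := by
  rw [lagMoment_succ, lagMoment_zero_succ, Finset.sum_range_succ, Finset.sum_range_one,
    Nat.choose_zero_right, Nat.choose_self]
  ring

lemma lagMoment_add_le_succ (hf0 : ∀ n, 0 ≤ f n) (m n : ℕ) :
    lagMoment f m n + f n ≤ lagMoment f m (n + 1) := by
  have hrest : 0 ≤ ∑ i ∈ Finset.range m, (m.choose i : ℝ) * lagMoment f i n :=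
    Finset.sum_nonneg fun i _ => mul_nonneg (by positivity) (lagMoment_nonneg hf0 i n)
  rw [lagMoment_succ, Finset.sum_range_succ, Nat.choose_self, Nat.cast_one, one_mul]
  linarith

lemma lagMoment_monotone (hf0 : ∀ n, 0 ≤ f n) (m : ℕ) : Monotone (lagMoment f m) :=
  monotone_nat_of_le_succ fun n => by linarith [lagMoment_add_le_succ hf0 m n, hf0 n]

lemma tendsto_lagMoment_atTop (hf : Monotone f) (hpos : ∀ n, 0 < f n) (m : ℕ) :
    Tendsto (lagMoment f m) atTop atTop := by
  have hlower (n : ℕ) : n * f 0 ≤ lagMoment f m n := by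
    induction n with
    | zero => simp [lagMoment_zero_right]
    | succ n ih =>
      push_cast
      linarith [lagMoment_add_le_succ (fun n => (hpos n).le) m n, hf n.zero_le]
  exact tendsto_atTop_mono hlower (tendsto_natCast_atTop_atTop.atTop_mul_const (hpos 0))

lemma lagMoment_one_sq_le (hf0 : ∀ n, 0 ≤ f n) (n : ℕ) :
    lagMoment f 1 n ^ 2 ≤ lagMoment f 0 n * lagMoment f 2 n := by
  have hterm (m k : ℕ) : 0 ≤ ((k : ℝ) + 1) ^ m * lag f n (k + 1) :=
    mul_nonneg (by positivity) (lag_nonneg hf0 _ _)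
  exact Finset.sum_sq_le_sum_mul_sum_of_sq_le_mul _ (fun k _ => hterm 0 k) (fun k _ => hterm 2 k)
    fun k _ => le_of_eq (by ring)

lemma sq_div_two_mul_lag_le_lagMoment_one (hf : Monotone f) (hf0 : ∀ n, 0 ≤ f n) (n h : ℕ) :
    (h : ℝ) ^ 2 / 2 * lag f n h ≤ lagMoment f 1 n := by
  have hgauss : (h : ℝ) ^ 2 / 2 ≤ ∑ k ∈ Finset.range h, ((k : ℝ) + 1) := by
    induction h with
    | zero => simp
    | succ h ih => rw [Finset.sum_range_succ]; push_cast; linarith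
  rcases le_or_gt h n with hn | hn
  · calc (h : ℝ) ^ 2 / 2 * lag f n h
        ≤ (∑ k ∈ Finset.range h, ((k : ℝ) + 1)) * lag f n h := by
          gcongr
          exact lag_nonneg hf0 n h
      _ = ∑ k ∈ Finset.range h, ((k : ℝ) + 1) ^ 1 * lag f n h := by
          simp only [Finset.sum_mul, pow_one]
      _ ≤ ∑ k ∈ Finset.range h, ((k : ℝ) + 1) ^ 1 * lag f n (k + 1) := by
          gcongr with k hk
          exact lag_antitone hf hf0 n (Finset.mem_range.1 hk)
      _ ≤ lagMoment f 1 n :=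
          Finset.sum_le_sum_of_subset_of_nonneg (Finset.range_mono hn)
            fun _ _ _ => mul_nonneg (by positivity) (lag_nonneg hf0 _ _)
  · rw [lag_of_lt hn, mul_zero]
    exact lagMoment_nonneg hf0 1 n

end Lag

section Decay

variable {f : ℕ → ℝ} {C : ℝ}

lemma lag_le_half (hf : Monotone f) (hf0 : ∀ n, 0 ≤ f n) {n h : ℕ}
    (hC : lagMoment f 1 n ≤ C * (n * f n)) (hh : 0 < h) (hnh : 4 * C * n ≤ (h : ℝ) ^ 2) :
    lag f n h ≤ f n / 2 := by
  have hsq : (0 : ℝ) < (h : ℝ) ^ 2 / 2 := by positivity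
  refine le_of_mul_le_mul_left ?_ hsq
  calc (h : ℝ) ^ 2 / 2 * lag f n h ≤ C * (n * f n) :=
        (sq_div_two_mul_lag_le_lagMoment_one hf hf0 n h).trans hC
    _ = 4 * C * n * (f n / 4) := by ring
    _ ≤ (h : ℝ) ^ 2 * (f n / 4) := by
        gcongr
        linarith [hf0 n]
    _ = (h : ℝ) ^ 2 / 2 * (f n / 2) := by ring

lemma lag_mul_le_div_two_pow (hf : Monotone f) (hf0 : ∀ n, 0 ≤ f n) (hC0 : 0 ≤ C)
    (hC : ∀ n, lagMoment f 1 n ≤ C * (n * f n)) {n h : ℕ} (hh : 0 < h)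
    (hnh : 4 * C * n ≤ (h : ℝ) ^ 2) (i : ℕ) :
    lag f n (i * h) ≤ f n / 2 ^ i := by
  induction i with
  | zero => simp [lag]
  | succ i ih =>
    rw [Nat.succ_mul]
    rcases le_or_gt (i * h) n with hi | hi
    · have hstep : 4 * C * ((n - i * h : ℕ) : ℝ) ≤ (h : ℝ) ^ 2 := by
        refine le_trans ?_ hnh
        gcongr
        exact Nat.sub_le n (i * h)
      rw [lag, if_pos hi] at ih
      calc lag f n (i * h + h) = lag f (n - i * h) h := lag_add hi h
        _ ≤ f (n - i * h) / 2 := lag_le_half hf hf0 (hC _) hh hstep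
        _ ≤ f n / 2 ^ i / 2 := by gcongr
        _ = f n / 2 ^ (i + 1) := by rw [pow_succ, div_div]
    · rw [lag_of_lt (by omega)]
      exact div_nonneg (hf0 n) (by positivity)

lemma lagMomentScale_one (f : ℕ → ℝ) (n : ℕ) : lagMomentScale f 1 n = n * f n := by
  rw [lagMomentScale, Real.sq_sqrt n.cast_nonneg]

lemma exists_lagMoment_one_le (hpos : ∀ n, 0 < f n)
    (hbound : lagMoment f 1 =O[atTop] lagMomentScale f 1) :
    ∃ C > 0, ∀ n : ℕ, lagMoment f 1 n ≤ C * (n * f n) := by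
  obtain ⟨C, hC0, hC⟩ := bound_of_isBigO_nat_atTop hbound
  refine ⟨C, hC0, fun n => ?_⟩
  rcases n.eq_zero_or_pos with rfl | hn
  · simp [lagMoment_zero_right]
  · have hscale_pos : 0 < (n : ℝ) * f n := mul_pos (by positivity) (hpos n)
    have hn := hC (x := n) (by rw [lagMomentScale_one]; exact hscale_pos.ne')
    rw [lagMomentScale_one, Real.norm_of_nonneg hscale_pos.le] at hn
    exact (le_abs_self _).trans hn

lemma one_div_two_pow_div_le_exp {h : ℕ} (hh : 0 < h) (k : ℕ) :
    1 / (2 : ℝ) ^ (k / h) ≤ 2 * Real.exp (-(Real.log 2 / h * k)) := by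
  have hfloor : (k : ℝ) / h ≤ (k / h : ℕ) + 1 := by
    rw [div_le_iff₀ (by positivity), mul_comm]
    exact_mod_cast (Nat.lt_mul_div_succ k hh).le
  have hlog : 0 < Real.log 2 := by positivity
  have hleft : 1 / (2 : ℝ) ^ (k / h) = Real.exp (-((k / h : ℕ) * Real.log 2)) := by
    rw [Real.exp_neg, Real.exp_nat_mul, Real.exp_log two_pos, one_div]
  have hright : 2 * Real.exp (-(Real.log 2 / h * k)) =
      Real.exp (Real.log 2 * (1 - k / h)) := by
    rw [mul_sub, mul_one, sub_eq_add_neg, Real.exp_add, Real.exp_log two_pos]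
    ring_nf
  rw [hleft, hright, Real.exp_le_exp]
  nlinarith

lemma exists_lag_le_exp (hf : Monotone f) (hpos : ∀ n, 0 < f n)
    (hbound : lagMoment f 1 =O[atTop] lagMomentScale f 1) :
    ∃ a > 0, ∀ n > 0, ∀ k : ℕ, lag f n k ≤ 2 * Real.exp (-(a / √n * k)) * f n := by
  have hf0 (n : ℕ) : 0 ≤ f n := (hpos n).le
  obtain ⟨C, hC0, hC⟩ := exists_lagMoment_one_le hpos hbound
  refine ⟨Real.log 2 / (2 * √C + 1), by positivity, fun n hn k => ?_⟩
  have hsqrt : 1 ≤ √(n : ℝ) := Real.one_le_sqrt.2 (by exact_mod_cast hn)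
  set h := ⌈2 * √C * √n⌉₊
  have hh : 0 < h := Nat.ceil_pos.2 (by positivity)
  have hlower : 4 * C * n ≤ (h : ℝ) ^ 2 := by
    calc 4 * C * n = (2 * √C * √n) ^ 2 := by
          rw [mul_pow, mul_pow, Real.sq_sqrt hC0.le, Real.sq_sqrt n.cast_nonneg]; ring
      _ ≤ (h : ℝ) ^ 2 := by gcongr; exact Nat.le_ceil _
  have hupper : (h : ℝ) ≤ (2 * √C + 1) * √n := by
    linarith [Nat.ceil_lt_add_one (show 0 ≤ 2 * √C * √n by positivity)]
  calc lag f n k ≤ lag f n (k / h * h) := lag_antitone hf hf0 n (Nat.div_mul_le_self k h)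
    _ ≤ f n / 2 ^ (k / h) := lag_mul_le_div_two_pow hf hf0 hC0.le hC hh hlower (k / h)
    _ = 1 / 2 ^ (k / h) * f n := by ring
    _ ≤ 2 * Real.exp (-(Real.log 2 / h * k)) * f n := by
        gcongr
        exacts [hf0 n, one_div_two_pow_div_le_exp hh k]
    _ ≤ 2 * Real.exp (-(Real.log 2 / (2 * √C + 1) / √n * k)) * f n := by
        rw [div_div]
        gcongr
        exact hf0 n

lemma sum_exp_neg_mul_le {x : ℝ} (hx : 0 < x) (N : ℕ) :
    ∑ d ∈ Finset.range N, Real.exp (-(x * ((d : ℝ) + 1))) ≤ 1 / x := by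
  have hlt : Real.exp (-x) < 1 := by simpa using hx
  have hgeom : ∑ d ∈ Finset.range N, Real.exp (-x) ^ d ≤ (1 - Real.exp (-x))⁻¹ := by
    rw [← tsum_geometric_of_lt_one (Real.exp_pos _).le hlt]
    exact (summable_geometric_of_lt_one (Real.exp_pos _).le hlt).sum_le_tsum _
      fun _ _ => by positivity
  calc ∑ d ∈ Finset.range N, Real.exp (-(x * ((d : ℝ) + 1)))
      = Real.exp (-x) * ∑ d ∈ Finset.range N, Real.exp (-x) ^ d := by
        rw [Finset.mul_sum]
        refine Finset.sum_congr rfl fun d _ => ?_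
        rw [← Real.exp_nat_mul, ← Real.exp_add]
        ring_nf
    _ ≤ Real.exp (-x) * (1 - Real.exp (-x))⁻¹ := by gcongr
    _ ≤ 1 / x := by
        rw [← div_eq_mul_inv, div_le_div_iff₀ (by linarith) hx]
        have hexp : Real.exp (-x) * Real.exp x = 1 := by rw [← Real.exp_add]; simp
        nlinarith [Real.add_one_le_exp x, Real.exp_pos (-x)]

lemma pow_mul_exp_neg_le (m : ℕ) {y : ℝ} (hy : 0 ≤ y) :
    y ^ m * Real.exp (-y) ≤ m.factorial := by
  rw [Real.exp_neg, ← div_eq_mul_inv, div_le_iff₀ (Real.exp_pos y), ← div_le_iff₀' (by positivity)]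
  exact Real.pow_div_factorial_le_exp y hy m

lemma sum_pow_mul_exp_neg_mul_le (m : ℕ) {x : ℝ} (hx : 0 < x) (N : ℕ) :
    ∑ d ∈ Finset.range N, ((d : ℝ) + 1) ^ m * Real.exp (-(x * ((d : ℝ) + 1))) ≤
      m.factorial * (2 / x) ^ (m + 1) := by
  have hterm (t : ℝ) (ht : 0 ≤ t) : t ^ m * Real.exp (-(x * t)) ≤
      m.factorial * (2 / x) ^ m * Real.exp (-(x / 2 * t)) := by
    calc t ^ m * Real.exp (-(x * t))
        = (2 / x) ^ m * ((x / 2 * t) ^ m * Real.exp (-(x / 2 * t))) *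
            Real.exp (-(x / 2 * t)) := by
          have hsplit : Real.exp (-(x * t)) =
              Real.exp (-(x / 2 * t)) * Real.exp (-(x / 2 * t)) := by
            rw [← Real.exp_add]; ring_nf
          have hpow : t ^ m = (2 / x) ^ m * (x / 2 * t) ^ m := by
            rw [← mul_pow]; congr 1; field_simp
          rw [hsplit, hpow]
          ring
      _ ≤ (2 / x) ^ m * m.factorial * Real.exp (-(x / 2 * t)) := by
          gcongr
          exact pow_mul_exp_neg_le m (by positivity)
      _ = m.factorial * (2 / x) ^ m * Real.exp (-(x / 2 * t)) := by ring
  calc ∑ d ∈ Finset.range N, ((d : ℝ) + 1) ^ m * Real.exp (-(x * ((d : ℝ) + 1)))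
      ≤ ∑ d ∈ Finset.range N,
          m.factorial * (2 / x) ^ m * Real.exp (-(x / 2 * ((d : ℝ) + 1))) :=
        Finset.sum_le_sum fun d _ => hterm _ (by positivity)
    _ ≤ m.factorial * (2 / x) ^ m * (1 / (x / 2)) := by
        rw [← Finset.mul_sum]
        gcongr
        exact sum_exp_neg_mul_le (half_pos hx) N
    _ = m.factorial * (2 / x) ^ (m + 1) := by rw [one_div_div, pow_succ, mul_assoc]

lemma lagMomentScale_pos (hpos : ∀ n, 0 < f n) (m : ℕ) {n : ℕ} (hn : 0 < n) :
    0 < lagMomentScale f m n :=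
  mul_pos (by positivity) (hpos n)

lemma exists_stridedLagMoment_le (hf : Monotone f) (hpos : ∀ n, 0 < f n)
    (hbound : lagMoment f 1 =O[atTop] lagMomentScale f 1) (m : ℕ) :
    ∃ C > 0, ∀ n > 0, ∀ j > 0,
      stridedLagMoment f m j n ≤ C / (j : ℝ) ^ (m + 1) * lagMomentScale f m n := by
  obtain ⟨a, ha, hdecay⟩ := exists_lag_le_exp hf hpos hbound
  refine ⟨2 * m.factorial * (2 / a) ^ (m + 1), by positivity, fun n hn j hj => ?_⟩
  have hfn := (hpos n).le
  set x : ℝ := a / √n * j with hx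
  calc stridedLagMoment f m j n
      ≤ ∑ d ∈ Finset.range n,
          2 * f n * (((d : ℝ) + 1) ^ m * Real.exp (-(x * ((d : ℝ) + 1)))) := by
        refine Finset.sum_le_sum fun d _ => ?_
        have hd := hdecay n hn ((d + 1) * j)
        have hexp : a / √n * ((d + 1) * j : ℕ) = x * ((d : ℝ) + 1) := by
          rw [hx]; push_cast; ring
        rw [hexp] at hd
        calc _ ≤ ((d : ℝ) + 1) ^ m * (2 * Real.exp (-(x * ((d : ℝ) + 1))) * f n) := by gcongr
          _ = _ := by ring
    _ ≤ 2 * f n * (m.factorial * (2 / x) ^ (m + 1)) := by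
        rw [← Finset.mul_sum]
        gcongr
        exact sum_pow_mul_exp_neg_mul_le m (by positivity) n
    _ = 2 * m.factorial * (2 / a) ^ (m + 1) / (j : ℝ) ^ (m + 1) * lagMomentScale f m n := by
        have hquot : 2 / x = 2 / a * (√n / j) := by rw [hx]; field_simp
        rw [hquot, mul_pow, div_pow (√(n : ℝ)), lagMomentScale]
        ring

lemma isBigO_lagMoment (hf : Monotone f) (hpos : ∀ n, 0 < f n)
    (hbound : lagMoment f 1 =O[atTop] lagMomentScale f 1) (m : ℕ) :
    lagMoment f m =O[atTop] lagMomentScale f m := by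
  obtain ⟨C, -, hC⟩ := exists_stridedLagMoment_le hf hpos hbound m
  refine IsBigO.of_bound C ?_
  filter_upwards [eventually_gt_atTop 0] with n hn
  rw [Real.norm_of_nonneg (lagMoment_nonneg (fun n => (hpos n).le) m n),
    Real.norm_of_nonneg (lagMomentScale_pos hpos m hn).le]
  simpa [stridedLagMoment_one_right] using hC n hn 1 one_pos

end Decay

section Sieve

lemma pow_mul_sum_mul_stride_le {g : ℕ → ℝ} (hg : Antitone g) (hg0 : ∀ k, 0 ≤ g k) (m j N : ℕ) :
    (j : ℝ) ^ (m + 1) * ∑ d ∈ Finset.range N, ((d : ℝ) + 1) ^ m * g ((d + 1) * j) ≤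
      ∑ k ∈ Finset.range (N * j), ((k : ℝ) + 1 + j) ^ m * g (k + 1) := by
  induction N with
  | zero => simp
  | succ N ih =>
    rw [Finset.sum_range_succ, mul_add, Nat.succ_mul, Finset.sum_range_add]
    refine add_le_add ih ?_
    calc (j : ℝ) ^ (m + 1) * (((N : ℝ) + 1) ^ m * g (N * j + j))
        = ∑ _r ∈ Finset.range j, (((N : ℝ) + 1) * j) ^ m * g (N * j + j) := by
          rw [Finset.sum_const, Finset.card_range, nsmul_eq_mul, mul_pow]
          ring
      _ ≤ ∑ r ∈ Finset.range j, (((N * j + r : ℕ) : ℝ) + 1 + j) ^ m * g (N * j + r + 1) := by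
          refine Finset.sum_le_sum fun r hr => ?_
          have hr := Finset.mem_range.1 hr
          gcongr
          · exact hg0 _
          · push_cast
            linarith [(Nat.cast_nonneg r : (0 : ℝ) ≤ r)]
          · exact hg (by omega)

-- The first block `k + 1 ≤ j` contributes nothing, because there the subtraction truncates to `0`.
lemma sum_le_pow_mul_sum_mul_stride {g : ℕ → ℝ} (hg : Antitone g) (hg0 : ∀ k, 0 ≤ g k)
    (m j N : ℕ) :
    ∑ k ∈ Finset.range ((N + 1) * j), ((k + 1 - j : ℕ) : ℝ) ^ (m + 1) * g (k + 1) ≤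
      (j : ℝ) ^ (m + 2) * ∑ d ∈ Finset.range N, ((d : ℝ) + 1) ^ (m + 1) * g ((d + 1) * j) := by
  induction N with
  | zero =>
    rw [Finset.range_zero, Finset.sum_empty, mul_zero, zero_add, one_mul]
    refine le_of_eq (Finset.sum_eq_zero fun k hk => ?_)
    rw [Nat.sub_eq_zero_of_le (Finset.mem_range.1 hk), Nat.cast_zero, zero_pow m.succ_ne_zero,
      zero_mul]
  | succ N ih =>
    rw [Finset.sum_range_succ, mul_add, Nat.succ_mul (N + 1), Finset.sum_range_add]
    refine add_le_add ih ?_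
    calc ∑ r ∈ Finset.range j,
          (((N + 1) * j + r + 1 - j : ℕ) : ℝ) ^ (m + 1) * g ((N + 1) * j + r + 1)
        ≤ ∑ _r ∈ Finset.range j, (((N + 1) * j : ℕ) : ℝ) ^ (m + 1) * g ((N + 1) * j) := by
          refine Finset.sum_le_sum fun r hr => ?_
          have hr := Finset.mem_range.1 hr
          gcongr
          · exact hg0 _
          · omega
          · exact hg (by omega)
      _ = (j : ℝ) ^ (m + 2) * (((N : ℝ) + 1) ^ (m + 1) * g ((N + 1) * j)) := by
          rw [Finset.sum_const, Finset.card_range, nsmul_eq_mul]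
          push_cast
          rw [mul_pow]
          ring

lemma add_pow_succ_le (m : ℕ) {x y : ℝ} (hx : 1 ≤ x) (hy : 0 ≤ y) :
    (x + y) ^ (m + 1) ≤ x ^ (m + 1) + (m + 1) * y * (1 + y) ^ m * x ^ m := by
  have hdiff := le_of_abs_le (abs_pow_sub_pow_le (x + y) x (m + 1))
  rw [add_sub_cancel_left, abs_of_nonneg hy, abs_of_nonneg (by linarith : 0 ≤ x + y),
    abs_of_nonneg (by linarith : 0 ≤ x), max_eq_left (by linarith), Nat.add_sub_cancel] at hdiff
  have hfactor : (x + y) ^ m ≤ (1 + y) ^ m * x ^ m := by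
    rw [← mul_pow]
    gcongr
    nlinarith
  calc (x + y) ^ (m + 1) ≤ x ^ (m + 1) + y * (m + 1 : ℕ) * (x + y) ^ m := by linarith
    _ ≤ x ^ (m + 1) + y * (m + 1 : ℕ) * ((1 + y) ^ m * x ^ m) := by gcongr
    _ = x ^ (m + 1) + (m + 1) * y * (1 + y) ^ m * x ^ m := by push_cast; ring

lemma pow_succ_sub_le_natCast_sub_pow (m k j : ℕ) :
    (k : ℝ) ^ (m + 1) - (m + 1) * j * (k : ℝ) ^ m ≤ ((k - j : ℕ) : ℝ) ^ (m + 1) := by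
  have hle : ((k - j : ℕ) : ℝ) ≤ k := by exact_mod_cast Nat.sub_le k j
  have hsub : (k : ℝ) - (k - j : ℕ) ≤ j := by
    rw [sub_le_iff_le_add']
    exact_mod_cast Nat.sub_le_iff_le_add.1 le_rfl
  have hdiff := le_of_abs_le (abs_pow_sub_pow_le (k : ℝ) ((k - j : ℕ) : ℝ) (m + 1))
  rw [abs_of_nonneg (sub_nonneg.2 hle), Nat.abs_cast, Nat.abs_cast, max_eq_left hle,
    Nat.add_sub_cancel] at hdiff
  have hcoeff : ((k : ℝ) - (k - j : ℕ)) * (m + 1 : ℕ) * (k : ℝ) ^ m ≤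
      j * (m + 1 : ℕ) * (k : ℝ) ^ m := by gcongr
  push_cast at hcoeff hdiff ⊢
  linarith

variable {f : ℕ → ℝ}

lemma pow_mul_stridedLagMoment_le (hf : Monotone f) (hf0 : ∀ n, 0 ≤ f n) (m n : ℕ) {j : ℕ}
    (hj : 0 < j) :
    (j : ℝ) ^ (m + 2) * stridedLagMoment f (m + 1) j n ≤
      lagMoment f (m + 1) n + (m + 1) * j * (1 + j) ^ m * lagMoment f m n := by
  have hblock := pow_mul_sum_mul_stride_le (lag_antitone hf hf0 n) (lag_nonneg hf0 n) (m + 1) j n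
  rw [sum_mul_lag_eq_of_le (fun k => ((k : ℝ) + 1 + j) ^ (m + 1)) (Nat.le_mul_of_pos_right n hj)]
    at hblock
  refine hblock.trans ?_
  rw [lagMoment, lagMoment, Finset.mul_sum, ← Finset.sum_add_distrib]
  refine Finset.sum_le_sum fun k _ => ?_
  rw [← mul_assoc, ← add_mul]
  exact mul_le_mul_of_nonneg_right
    (add_pow_succ_le m (le_add_of_nonneg_left k.cast_nonneg) j.cast_nonneg) (lag_nonneg hf0 _ _)

lemma le_pow_mul_stridedLagMoment (hf : Monotone f) (hf0 : ∀ n, 0 ≤ f n) (m n : ℕ) {j : ℕ}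
    (hj : 0 < j) :
    lagMoment f (m + 1) n - (m + 1) * j * lagMoment f m n ≤
      (j : ℝ) ^ (m + 2) * stridedLagMoment f (m + 1) j n := by
  have hblock := sum_le_pow_mul_sum_mul_stride (lag_antitone hf hf0 n) (lag_nonneg hf0 n) m j n
  rw [sum_mul_lag_eq_of_le (fun k => ((k + 1 - j : ℕ) : ℝ) ^ (m + 1))
    (n.le_succ.trans (Nat.le_mul_of_pos_right _ hj))] at hblock
  refine le_trans ?_ hblock
  rw [lagMoment, lagMoment, Finset.mul_sum, ← Finset.sum_sub_distrib]
  refine Finset.sum_le_sum fun k _ => ?_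
  rw [← mul_assoc, ← sub_mul]
  refine mul_le_mul_of_nonneg_right ?_ (lag_nonneg hf0 _ _)
  exact_mod_cast pow_succ_sub_le_natCast_sub_pow m (k + 1) j

lemma isBigO_stridedLagMoment_sub (hf : Monotone f) (hf0 : ∀ n, 0 ≤ f n) (m : ℕ) {j : ℕ}
    (hj : 0 < j) :
    (fun n => stridedLagMoment f (m + 1) j n - 1 / (j : ℝ) ^ (m + 2) * lagMoment f (m + 1) n)
      =O[atTop] lagMoment f m := by
  have hscaled : (fun n => (j : ℝ) ^ (m + 2) * stridedLagMoment f (m + 1) j n -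
      lagMoment f (m + 1) n) =O[atTop] lagMoment f m := by
    refine IsBigO.of_bound ((m + 1) * j * (1 + j) ^ m) (Eventually.of_forall fun n => ?_)
    have hS := lagMoment_nonneg hf0 m n
    have hcoeff : (m + 1) * j * lagMoment f m n ≤
        (m + 1) * j * (1 + j) ^ m * lagMoment f m n := by
      refine mul_le_mul_of_nonneg_right (le_mul_of_one_le_right (by positivity) ?_) hS
      exact one_le_pow₀ (le_add_of_nonneg_right j.cast_nonneg)
    rw [Real.norm_of_nonneg hS, Real.norm_eq_abs, abs_sub_le_iff]
    constructor
    · linarith [pow_mul_stridedLagMoment_le hf hf0 m n hj]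
    · linarith [le_pow_mul_stridedLagMoment hf hf0 m n hj]
  refine (hscaled.const_mul_left (1 / (j : ℝ) ^ (m + 2))).congr_left fun n => ?_
  field_simp

lemma tendsto_sqrt_natCast_atTop : Tendsto (fun n : ℕ => √(n : ℝ)) atTop atTop :=
  Real.tendsto_sqrt_atTop.comp tendsto_natCast_atTop_atTop

lemma isLittleO_one_sqrt_pow_succ (m : ℕ) :
    (fun _ : ℕ => (1 : ℝ)) =o[atTop] fun n : ℕ => √(n : ℝ) ^ (m + 1) :=
  (isLittleO_one_left_iff ℝ).2 <| tendsto_norm_atTop_atTop.comp <|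
    (tendsto_pow_atTop m.succ_ne_zero).comp tendsto_sqrt_natCast_atTop

lemma isLittleO_self_lagMomentScale (f : ℕ → ℝ) (m : ℕ) : f =o[atTop] lagMomentScale f m := by
  refine ((isLittleO_one_sqrt_pow_succ m).mul_isBigO (isBigO_refl f atTop)).congr_left fun n => ?_
  exact one_mul _

lemma isLittleO_lagMomentScale_of_lt (f : ℕ → ℝ) {i m : ℕ} (h : i < m) :
    lagMomentScale f i =o[atTop] lagMomentScale f m := by
  obtain ⟨r, rfl⟩ := Nat.exists_eq_add_of_lt h
  refine ((isLittleO_one_sqrt_pow_succ r).mul_isBigO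
    (isBigO_refl (lagMomentScale f i) atTop)).congr (fun n => one_mul _) fun n => ?_
  simp only [lagMomentScale]
  ring

/-- The zeta value `ζ(s)` at a natural number `s`, as a real series; it is the junk value `0`
for `s ≤ 1`. -/
noncomputable def zetaSum (s : ℕ) : ℝ := ∑' j : ℕ, (1 : ℝ) / (j + 1) ^ s

lemma summable_one_div_add_one_pow {s : ℕ} (hs : 1 < s) :
    Summable fun j : ℕ => (1 : ℝ) / (j + 1) ^ s := by
  exact_mod_cast (summable_nat_add_iff 1).2 (Real.summable_one_div_nat_pow.2 hs)

lemma zetaSum_pos {s : ℕ} (hs : 1 < s) : 0 < zetaSum s :=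
  (summable_one_div_add_one_pow hs).tsum_pos (fun j => by positivity) 0 (by positivity)

lemma zetaSum_two : zetaSum 2 = Real.pi ^ 2 / 6 := by
  simpa [zetaSum] using ((hasSum_nat_add_iff' 1).2 hasSum_zeta_two).tsum_eq

lemma exists_norm_stridedLagMoment_sub_le (hf : Monotone f) (hpos : ∀ n, 0 < f n)
    (hbound : lagMoment f 1 =O[atTop] lagMomentScale f 1) (m : ℕ) :
    ∃ C : ℝ, ∀ n > 0, ∀ j > 0,
      ‖stridedLagMoment f m j n - 1 / (j : ℝ) ^ (m + 1) * lagMoment f m n‖ ≤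
        C * (1 / (j : ℝ) ^ (m + 1)) * lagMomentScale f m n := by
  have hf0 (n : ℕ) : 0 ≤ f n := (hpos n).le
  obtain ⟨C, -, hC⟩ := exists_stridedLagMoment_le hf hpos hbound m
  refine ⟨C, fun n hn j hj => ?_⟩
  have hstrided : stridedLagMoment f m j n ≤ C * (1 / (j : ℝ) ^ (m + 1)) * lagMomentScale f m n :=
    (hC n hn j hj).trans_eq (by ring)
  have hfull : lagMoment f m n ≤ C * lagMomentScale f m n := by
    simpa [stridedLagMoment_one_right] using hC n hn 1 one_pos
  have hweighted : 1 / (j : ℝ) ^ (m + 1) * lagMoment f m n ≤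
      C * (1 / (j : ℝ) ^ (m + 1)) * lagMomentScale f m n :=
    (mul_le_mul_of_nonneg_left hfull (by positivity)).trans_eq (by ring)
  have hweighted0 : 0 ≤ 1 / (j : ℝ) ^ (m + 1) * lagMoment f m n :=
    mul_nonneg (by positivity) (lagMoment_nonneg hf0 m n)
  rw [Real.norm_eq_abs, abs_sub_le_iff]
  constructor <;> linarith [stridedLagMoment_nonneg hf0 m j n]

lemma tsum_stridedLagMoment_sub (f : ℕ → ℝ) {m : ℕ} (hm : 0 < m) (n : ℕ) :
    ∑' j : ℕ, (stridedLagMoment f m (j + 1) n - 1 / ((j : ℝ) + 1) ^ (m + 1) * lagMoment f m n) =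
      ∑ j ∈ Finset.range n, stridedLagMoment f m (j + 1) n - zetaSum (m + 1) * lagMoment f m n := by
  have hvanish : ∀ j ∉ Finset.range n, stridedLagMoment f m (j + 1) n = 0 := fun j hj =>
    stridedLagMoment_eq_zero_of_lt f m (by simpa [Nat.lt_succ_iff] using hj)
  rw [(summable_of_ne_finset_zero hvanish).tsum_sub
    ((summable_one_div_add_one_pow (by omega)).mul_right _), tsum_mul_right,
    tsum_eq_sum hvanish, zetaSum]

lemma isLittleO_sum_stridedLagMoment_sub (hf : Monotone f) (hpos : ∀ n, 0 < f n)
    (hbound : lagMoment f 1 =O[atTop] lagMomentScale f 1) {m : ℕ} (hm : 0 < m) :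
    (fun n => ∑ j ∈ Finset.range n, stridedLagMoment f m (j + 1) n -
      zetaSum (m + 1) * lagMoment f m n) =o[atTop] lagMomentScale f m := by
  obtain ⟨C, hC⟩ := exists_norm_stridedLagMoment_sub_le hf hpos hbound m
  have hlim : Tendsto (fun n : ℕ => ∑' j : ℕ,
      (stridedLagMoment f m (j + 1) n - 1 / ((j : ℝ) + 1) ^ (m + 1) * lagMoment f m n) /
        lagMomentScale f m n) atTop (𝓝 (∑' _ : ℕ, (0 : ℝ))) := by
    refine tendsto_tsum_of_dominated_convergence
      ((summable_one_div_add_one_pow (Nat.succ_lt_succ hm)).mul_left C) (fun j => ?_) ?_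
    · obtain ⟨r, rfl⟩ := Nat.exists_eq_add_one_of_ne_zero hm.ne'
      have hsmall := (isBigO_stridedLagMoment_sub hf (fun n => (hpos n).le) r j.succ_pos).trans
        (isBigO_lagMoment hf hpos hbound r)
          |>.trans_isLittleO (isLittleO_lagMomentScale_of_lt f r.lt_succ_self)
      exact_mod_cast hsmall.tendsto_div_nhds_zero
    · filter_upwards [eventually_gt_atTop 0] with n hn j
      have hscale := lagMomentScale_pos hpos m hn
      rw [norm_div, Real.norm_of_nonneg hscale.le, div_le_iff₀ hscale]
      exact_mod_cast hC n hn (j + 1) j.succ_pos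
  rw [tsum_zero] at hlim
  refine (isLittleO_iff_tendsto' ?_).2 (hlim.congr fun n => ?_)
  · filter_upwards [eventually_gt_atTop 0] with n hn hzero
    exact absurd hzero (lagMomentScale_pos hpos m hn).ne'
  · rw [tsum_div_const, tsum_stridedLagMoment_sub f hm]

end Sieve

section StolzCesaro

lemma isEquivalent_of_isEquivalent_sub {u v : ℕ → ℝ} (hv : Monotone v)
    (hv_top : Tendsto v atTop atTop)
    (h : (fun n => u (n + 1) - u n) ~[atTop] fun n => v (n + 1) - v n) : u ~[atTop] v := by
  have hconst (x : ℝ) : (fun _ : ℕ => x) =o[atTop] v :=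
    isLittleO_const_left.2 (Or.inr (tendsto_norm_atTop_atTop.comp hv_top))
  have hsum := h.isLittleO.sum_range (fun n => sub_nonneg.2 (hv n.le_succ)) (by
    simpa only [Finset.sum_range_sub, sub_eq_add_neg _ (v 0)] using
      tendsto_atTop_add_const_right atTop (-v 0) hv_top)
  simp only [Pi.sub_apply, Finset.sum_sub_distrib (fun n => u (n + 1) - u n),
    Finset.sum_range_sub] at hsum
  have hv_sub : (fun n => v n - v 0) =O[atTop] v := (isBigO_refl v atTop).sub (hconst _).isBigO
  refine ((hsum.trans_isBigO hv_sub).add (hconst (u 0 - v 0))).congr_left fun n => ?_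
  rw [Pi.sub_apply]
  ring

lemma isEquivalent_of_sq {α : Type*} {l : Filter α} {u v : α → ℝ} (hu : ∀ x, 0 ≤ u x)
    (hv : ∀ x, 0 ≤ v x) (h : (fun x => u x ^ 2) ~[l] fun x => v x ^ 2) : u ~[l] v := by
  refine IsLittleO.of_pow (n := 2) (IsBigO.trans_isLittleO ?_ h.isLittleO) two_ne_zero
  refine isBigO_of_le l fun x => ?_
  have hsum : |u x - v x| ≤ u x + v x :=
    abs_sub_le_of_nonneg_of_le (hu x) (by linarith [hv x]) (hv x) (by linarith [hu x])
  calc ‖((u - v) ^ 2) x‖ = |u x - v x| * |u x - v x| := by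
        rw [Pi.pow_apply, Pi.sub_apply, norm_pow, Real.norm_eq_abs, sq]
    _ ≤ (u x + v x) * |u x - v x| := by gcongr
    _ = ‖u x ^ 2 - v x ^ 2‖ := by
        rw [sq_sub_sq, norm_mul, Real.norm_of_nonneg (add_nonneg (hu x) (hv x)), Real.norm_eq_abs]

lemma isLittleO_sqrt_succ_sub_sqrt :
    (fun n : ℕ => √((n : ℝ) + 1) - √n) =o[atTop] fun _ : ℕ => (1 : ℝ) := by
  refine (isLittleO_one_iff ℝ).2 (squeeze_zero (fun n => ?_) (fun n => ?_)
    (tendsto_sqrt_natCast_atTop.comp (tendsto_add_atTop_nat 1)).inv_tendsto_atTop)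
  · exact sub_nonneg.2 (Real.sqrt_le_sqrt (by linarith))
  · have hsucc : √((n : ℝ) + 1) ^ 2 = n + 1 := Real.sq_sqrt (by positivity)
    have hself : √(n : ℝ) ^ 2 = n := Real.sq_sqrt n.cast_nonneg
    have hle : √(n : ℝ) ≤ √((n : ℝ) + 1) := Real.sqrt_le_sqrt (by linarith)
    rw [Pi.inv_apply, Function.comp_apply, Nat.cast_add_one, ← one_div, le_div_iff₀ (by positivity)]
    nlinarith [Real.sqrt_nonneg (n : ℝ)]

lemma isBigO_sqrt_succ : (fun n : ℕ => √((n : ℝ) + 1)) =O[atTop] fun n : ℕ => √(n : ℝ) := by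
  have hone : (fun _ : ℕ => (1 : ℝ)) =O[atTop] fun n : ℕ => √(n : ℝ) := by
    simpa using (isLittleO_one_sqrt_pow_succ 0).isBigO
  refine ((isLittleO_sqrt_succ_sub_sqrt.isBigO.trans hone).add (isBigO_refl _ _)).congr_left
    fun n => ?_
  exact sub_add_cancel _ _

lemma isLittleO_sqrt_succ_pow_sub_sqrt_pow (m : ℕ) :
    (fun n : ℕ => √((n : ℝ) + 1) ^ (m + 1) - √(n : ℝ) ^ (m + 1)) =o[atTop]
      fun n : ℕ => √(n : ℝ) ^ m := by
  have hgeom : (fun n : ℕ => ∑ i ∈ Finset.range (m + 1), √((n : ℝ) + 1) ^ i * √(n : ℝ) ^ (m - i))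
      =O[atTop] fun n : ℕ => √(n : ℝ) ^ m := by
    refine IsBigO.fun_sum fun i hi => ?_
    refine ((isBigO_sqrt_succ.pow i).mul (isBigO_refl _ atTop)).congr_right fun n => ?_
    rw [← pow_add, Nat.add_sub_cancel' (Nat.lt_succ_iff.1 (Finset.mem_range.1 hi))]
  refine (hgeom.mul_isLittleO isLittleO_sqrt_succ_sub_sqrt).congr (fun n => ?_) fun n => mul_one _
  exact geom_sum₂_mul (√((n : ℝ) + 1)) (√n) (m + 1)

end StolzCesaro

section Tauberian

variable {f : ℕ → ℝ} {c : ℝ}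

lemma isBigO_lagMoment_one_of_isEquivalent (hc : 0 < c)
    (hone : (fun n => c * lagMoment f 1 n) ~[atTop] lagMomentScale f 1) :
    lagMoment f 1 =O[atTop] lagMomentScale f 1 :=
  (isBigO_self_const_mul hc.ne' _ _).trans hone.isBigO

lemma lagMomentScale_one_sq (f : ℕ → ℝ) (n : ℕ) :
    lagMomentScale f 1 n ^ 2 = lagMomentScale f 0 n * lagMomentScale f 2 n := by
  simp only [lagMomentScale]
  ring

lemma isBigO_lagMomentScale_zero_lagMoment_zero (hf : Monotone f) (hpos : ∀ n, 0 < f n) (hc : 0 < c)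
    (hone : (fun n => c * lagMoment f 1 n) ~[atTop] lagMomentScale f 1) :
    lagMomentScale f 0 =O[atTop] lagMoment f 0 := by
  have hf0 (n : ℕ) : 0 ≤ f n := (hpos n).le
  have hscale_sq : (fun n => lagMomentScale f 1 n ^ 2) =O[atTop] fun n => lagMoment f 1 n ^ 2 :=
    (hone.symm.isBigO.trans (isBigO_const_mul_self c _ _)).pow 2
  have hcauchy : (fun n => lagMoment f 1 n ^ 2) =O[atTop]
      fun n => lagMoment f 0 n * lagMoment f 2 n := by
    refine isBigO_of_le _ fun n => ?_
    rw [Real.norm_of_nonneg (sq_nonneg _)]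
    exact (lagMoment_one_sq_le hf0 n).trans (Real.le_norm_self _)
  have hsecond : (fun n => lagMoment f 0 n * lagMoment f 2 n) =O[atTop]
      fun n => lagMoment f 0 n * lagMomentScale f 2 n :=
    (isBigO_refl _ _).mul
      (isBigO_lagMoment hf hpos (isBigO_lagMoment_one_of_isEquivalent hc hone) 2)
  have hprod := (hscale_sq.trans hcauchy).trans hsecond
  simp only [lagMomentScale_one_sq] at hprod
  refine (hprod.mul (isBigO_refl (fun n => (lagMomentScale f 2 n)⁻¹) atTop)).congr' ?_ ?_
  all_goals
    filter_upwards [eventually_gt_atTop 0] with n hn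
    exact mul_inv_cancel_right₀ (lagMomentScale_pos hpos 2 hn).ne' _

lemma isLittleO_self_lagMoment_zero (hf : Monotone f) (hpos : ∀ n, 0 < f n) (hc : 0 < c)
    (hone : (fun n => c * lagMoment f 1 n) ~[atTop] lagMomentScale f 1) :
    f =o[atTop] lagMoment f 0 :=
  (isLittleO_self_lagMomentScale f 0).trans_isBigO
    (isBigO_lagMomentScale_zero_lagMoment_zero hf hpos hc hone)

lemma isEquivalent_lagMoment_zero_succ (h : f =o[atTop] lagMoment f 0) :
    (fun n => lagMoment f 0 (n + 1)) ~[atTop] lagMoment f 0 := by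
  simp only [lagMoment_zero_succ]
  exact IsEquivalent.refl.add_isLittleO h

lemma isLittleO_lagMoment_zero_succ_sq (hf : Monotone f) (hpos : ∀ n, 0 < f n) (hc : 0 < c)
    (hone : (fun n => c * lagMoment f 1 n) ~[atTop] lagMomentScale f 1) :
    (fun n => lagMoment f 0 (n + 1) ^ 2) =o[atTop]
      fun n => 2 * (lagMomentScale f 1 n * lagMoment f 0 n) := by
  have hsucc := (isEquivalent_lagMoment_zero_succ
    (isLittleO_self_lagMoment_zero hf hpos hc hone)).isBigO
  have hbound := isBigO_lagMoment_one_of_isEquivalent hc hone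
  have hsmall := (hsucc.trans (isBigO_lagMoment hf hpos hbound 0))
    |>.trans_isLittleO (isLittleO_lagMomentScale_of_lt f zero_lt_one)
  refine ((hsmall.mul_isBigO hsucc).congr_left fun n => ?_).trans_isBigO
    (isBigO_self_const_mul two_ne_zero _ _)
  exact (sq _).symm

lemma isEquivalent_sub_mul_lagMoment_zero_sq (hf : Monotone f) (hpos : ∀ n, 0 < f n) (hc : 0 < c)
    (hone : (fun n => c * lagMoment f 1 n) ~[atTop] lagMomentScale f 1) :
    (fun n : ℕ => ((n + 1 : ℕ) : ℝ) * lagMoment f 0 (n + 1) ^ 2 - n * lagMoment f 0 n ^ 2) ~[atTop]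
      fun n => 2 * (lagMomentScale f 1 n * lagMoment f 0 n) := by
  have hquad : (fun n => lagMomentScale f 1 n * f n) =o[atTop]
      fun n => 2 * (lagMomentScale f 1 n * lagMoment f 0 n) :=
    ((isBigO_refl _ _).mul_isLittleO (isLittleO_self_lagMoment_zero hf hpos hc hone)).trans_isBigO
      (isBigO_self_const_mul two_ne_zero _ _)
  have herror := hquad.add (isLittleO_lagMoment_zero_succ_sq hf hpos hc hone)
  refine (IsEquivalent.refl.add_isLittleO herror).congr_left (Eventually.of_forall fun n => ?_)
  simp only [Pi.add_apply, lagMoment_zero_succ, lagMomentScale_one]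
  push_cast
  ring

lemma isEquivalent_sub_mul_lagMoment_one_sq (hf : Monotone f) (hpos : ∀ n, 0 < f n) (hc : 0 < c)
    (hone : (fun n => c * lagMoment f 1 n) ~[atTop] lagMomentScale f 1) :
    (fun n => c * lagMoment f 1 (n + 1) ^ 2 - c * lagMoment f 1 n ^ 2) ~[atTop]
      fun n => 2 * (lagMomentScale f 1 n * lagMoment f 0 n) := by
  have hcross : (fun n => 2 * (c * lagMoment f 1 n * lagMoment f 0 (n + 1))) ~[atTop]
      fun n => 2 * (lagMomentScale f 1 n * lagMoment f 0 n) :=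
    IsEquivalent.refl.mul (hone.mul
      (isEquivalent_lagMoment_zero_succ (isLittleO_self_lagMoment_zero hf hpos hc hone)))
  have herror := (isLittleO_lagMoment_zero_succ_sq hf hpos hc hone).const_mul_left c
  refine (hcross.add_isLittleO herror).congr_left (Eventually.of_forall fun n => ?_)
  simp only [Pi.add_apply, lagMoment_one_succ]
  ring

-- This is the energy integral of the difference equation `c * S₁ ~ n * Δ²S₁`, obtained on
-- multiplying by `ΔS₁ = S₀`.
lemma isEquivalent_mul_lagMoment_zero_sq (hf : Monotone f) (hpos : ∀ n, 0 < f n) (hc : 0 < c)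
    (hone : (fun n => c * lagMoment f 1 n) ~[atTop] lagMomentScale f 1) :
    (fun n : ℕ => n * lagMoment f 0 n ^ 2) ~[atTop] fun n => c * lagMoment f 1 n ^ 2 := by
  have hf0 (n : ℕ) : 0 ≤ f n := (hpos n).le
  refine isEquivalent_of_isEquivalent_sub (fun a b hab => ?_) ?_
    ((isEquivalent_sub_mul_lagMoment_zero_sq hf hpos hc hone).trans
      (isEquivalent_sub_mul_lagMoment_one_sq hf hpos hc hone).symm)
  · have hnonneg := lagMoment_nonneg hf0 1 a
    have hmono := lagMoment_monotone hf0 1 hab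
    gcongr
  · exact ((tendsto_pow_atTop two_ne_zero).comp (tendsto_lagMoment_atTop hf hpos 1)).const_mul_atTop
      hc

lemma isEquivalent_lagMoment_zero (hf : Monotone f) (hpos : ∀ n, 0 < f n) (hc : 0 < c)
    (hone : (fun n => c * lagMoment f 1 n) ~[atTop] lagMomentScale f 1) :
    lagMoment f 0 ~[atTop] fun n => 1 / √c * lagMomentScale f 0 n := by
  have hf0 (n : ℕ) : 0 ≤ f n := (hpos n).le
  have hroot : (fun n : ℕ => √n * lagMoment f 0 n) ~[atTop] fun n => √c * lagMoment f 1 n := by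
    refine isEquivalent_of_sq (fun n => mul_nonneg (by positivity) (lagMoment_nonneg hf0 0 n))
      (fun n => mul_nonneg (by positivity) (lagMoment_nonneg hf0 1 n)) ?_
    simp only [mul_pow, Real.sq_sqrt hc.le, Real.sq_sqrt (Nat.cast_nonneg _)]
    exact isEquivalent_mul_lagMoment_zero_sq hf hpos hc hone
  have hscaled : (fun n => √c * lagMoment f 1 n) ~[atTop]
      fun n => 1 / √c * lagMomentScale f 1 n := by
    refine (IsEquivalent.refl.mul hone).congr_left (Eventually.of_forall fun n => ?_)
    have hsqrt : 1 / √c * c = √c := by rw [one_div_mul_eq_div, Real.div_sqrt]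
    simp only [Pi.mul_apply, ← mul_assoc, hsqrt]
  have hquot := (hroot.trans hscaled).div (IsEquivalent.refl (u := fun n : ℕ => √(n : ℝ)))
  refine (hquot.congr_left ?_).congr_right ?_
  all_goals
    filter_upwards [eventually_gt_atTop 0] with n hn
    have hsqrt : √(n : ℝ) ≠ 0 := by positivity
    simp only [Pi.div_apply, lagMomentScale, div_eq_iff hsqrt]
    ring

lemma isLittleO_lagMoment_succ_sub (hf : Monotone f) (hpos : ∀ n, 0 < f n)
    (hbound : lagMoment f 1 =O[atTop] lagMomentScale f 1) (m : ℕ) :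
    (fun n => lagMoment f (m + 1) (n + 1) - lagMoment f (m + 1) n - (m + 1) * lagMoment f m n)
      =o[atTop] lagMomentScale f m := by
  have hlower : (fun n => ∑ i ∈ Finset.range m, ((m + 1).choose i : ℝ) * lagMoment f i n)
      =o[atTop] lagMomentScale f m := by
    refine IsLittleO.fun_sum fun i hi => IsLittleO.const_mul_left ?_ _
    exact (isBigO_lagMoment hf hpos hbound i).trans_isLittleO
      (isLittleO_lagMomentScale_of_lt f (Finset.mem_range.1 hi))
  refine (hlower.add (isLittleO_self_lagMomentScale f m)).congr_left fun n => ?_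
  rw [lagMoment_succ, Finset.sum_range_succ, Finset.sum_range_succ, Nat.choose_self,
    Nat.choose_succ_self_right]
  push_cast
  ring

lemma isLittleO_sqrt_pow_mul_lagMoment_zero_sub (hzero : lagMoment f 0 =O[atTop] lagMomentScale f 0)
    (hf_zero : f =o[atTop] lagMoment f 0) (m : ℕ) :
    (fun n : ℕ => √((n + 1 : ℕ) : ℝ) ^ (m + 1) * lagMoment f 0 (n + 1) -
      √(n : ℝ) ^ (m + 1) * lagMoment f 0 n - lagMomentScale f m n) =o[atTop]
        lagMomentScale f m := by
  have hsucc := (isEquivalent_lagMoment_zero_succ hf_zero).isBigO.trans hzero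
  refine ((isLittleO_sqrt_succ_pow_sub_sqrt_pow m).mul_isBigO hsucc).congr (fun n => ?_) fun n => ?_
  · rw [lagMoment_zero_succ, Nat.cast_add_one, lagMomentScale]
    ring
  · simp only [lagMomentScale]
    ring

lemma isEquivalent_lagMoment_succ_sub (hf : Monotone f) (hpos : ∀ n, 0 < f n)
    (hbound : lagMoment f 1 =O[atTop] lagMomentScale f 1) {m : ℕ} {a : ℝ} (ha : 0 < a)
    (hm : lagMoment f m ~[atTop] fun n => a * lagMomentScale f m n) :
    (fun n => lagMoment f (m + 1) (n + 1) - lagMoment f (m + 1) n) ~[atTop]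
      fun n => (m + 1) * a * lagMomentScale f m n := by
  have hmain : (fun n => (m + 1) * lagMoment f m n) ~[atTop]
      fun n => (m + 1) * a * lagMomentScale f m n :=
    (IsEquivalent.refl.mul hm).congr_right (Eventually.of_forall fun n => (mul_assoc _ _ _).symm)
  have hcoeff : ((m : ℝ) + 1) * a ≠ 0 := by positivity
  have herror := (isLittleO_lagMoment_succ_sub hf hpos hbound m).trans_isBigO
    (isBigO_self_const_mul hcoeff _ _)
  refine (hmain.add_isLittleO herror).congr_left (Eventually.of_forall fun n => ?_)
  rw [Pi.add_apply]
  ring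

lemma isEquivalent_lagMoment_succ (hf : Monotone f) (hpos : ∀ n, 0 < f n) (hc : 0 < c)
    (hone : (fun n => c * lagMoment f 1 n) ~[atTop] lagMomentScale f 1) {m : ℕ} {a : ℝ} (ha : 0 < a)
    (hm : lagMoment f m ~[atTop] fun n => a * lagMomentScale f m n) :
    lagMoment f (m + 1) ~[atTop] fun n => (m + 1) * a / √c * lagMomentScale f (m + 1) n := by
  have hbound := isBigO_lagMoment_one_of_isEquivalent hc hone
  have hcompare_sub : (fun n : ℕ =>
      (m + 1) * a * (√((n + 1 : ℕ) : ℝ) ^ (m + 1) * lagMoment f 0 (n + 1)) -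
        (m + 1) * a * (√(n : ℝ) ^ (m + 1) * lagMoment f 0 n)) ~[atTop]
      fun n => (m + 1) * a * lagMomentScale f m n := by
    have hsub : (fun n : ℕ => √((n + 1 : ℕ) : ℝ) ^ (m + 1) * lagMoment f 0 (n + 1) -
        √(n : ℝ) ^ (m + 1) * lagMoment f 0 n) ~[atTop] lagMomentScale f m :=
      isLittleO_sqrt_pow_mul_lagMoment_zero_sub (isBigO_lagMoment hf hpos hbound 0)
        (isLittleO_self_lagMoment_zero hf hpos hc hone) m
    exact (IsEquivalent.refl.mul hsub).congr_left (Eventually.of_forall fun n => mul_sub _ _ _)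
  have hcompare : (fun n : ℕ => (m + 1) * a * (√(n : ℝ) ^ (m + 1) * lagMoment f 0 n)) ~[atTop]
      lagMoment f (m + 1) :=
    isEquivalent_of_isEquivalent_sub (lagMoment_monotone (fun n => (hpos n).le) _)
      (tendsto_lagMoment_atTop hf hpos _)
      (hcompare_sub.trans (isEquivalent_lagMoment_succ_sub hf hpos hbound ha hm).symm)
  refine hcompare.symm.trans ((IsEquivalent.refl.mul (IsEquivalent.refl.mul
    (isEquivalent_lagMoment_zero hf hpos hc hone))).congr_right (Eventually.of_forall fun n => ?_))
  simp only [Pi.mul_apply, lagMomentScale]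
  ring

lemma isEquivalent_lagMoment (hf : Monotone f) (hpos : ∀ n, 0 < f n) (hc : 0 < c)
    (hone : (fun n => c * lagMoment f 1 n) ~[atTop] lagMomentScale f 1) (m : ℕ) :
    lagMoment f m ~[atTop] fun n => m.factorial / √c ^ (m + 1) * lagMomentScale f m n := by
  induction m with
  | zero => simpa using isEquivalent_lagMoment_zero hf hpos hc hone
  | succ m ih =>
    have hstep := isEquivalent_lagMoment_succ hf hpos hc hone (by positivity) ih
    refine hstep.congr_right (Eventually.of_forall fun n => ?_)
    simp only [Nat.factorial_succ]
    push_cast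
    ring

lemma isEquivalent_sum_stridedLagMoment (hf : Monotone f) (hpos : ∀ n, 0 < f n) (hc : 0 < c)
    (hone : (fun n => c * lagMoment f 1 n) ~[atTop] lagMomentScale f 1) {m : ℕ} (hm : 0 < m) :
    (fun n => ∑ j ∈ Finset.range n, stridedLagMoment f m (j + 1) n) ~[atTop]
      fun n => zetaSum (m + 1) * (m.factorial / √c ^ (m + 1)) * lagMomentScale f m n := by
  have hzeta := zetaSum_pos (Nat.succ_lt_succ hm)
  have hcoeff : zetaSum (m + 1) * (m.factorial / √c ^ (m + 1)) ≠ 0 := by positivity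
  have hmain : (fun n => zetaSum (m + 1) * lagMoment f m n) ~[atTop]
      fun n => zetaSum (m + 1) * (m.factorial / √c ^ (m + 1)) * lagMomentScale f m n :=
    (IsEquivalent.refl.mul (isEquivalent_lagMoment hf hpos hc hone m)).congr_right
      (Eventually.of_forall fun n => (mul_assoc _ _ _).symm)
  have hbound := isBigO_lagMoment_one_of_isEquivalent hc hone
  have herror := (isLittleO_sum_stridedLagMoment_sub hf hpos hbound hm)
    |>.trans_isBigO (isBigO_self_const_mul hcoeff _ _)
  refine (hmain.add_isLittleO herror).congr_left (Eventually.of_forall fun n => ?_)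
  exact add_sub_cancel _ _

end Tauberian

section Partition

/-- The number `p(n)` of partitions of `n`, as a real number. -/
def partitionCount (n : ℕ) : ℝ := Fintype.card (Nat.Partition n)

lemma partitionCount_pos (n : ℕ) : 0 < partitionCount n := by
  unfold partitionCount
  exact_mod_cast Fintype.card_pos (α := Nat.Partition n)

lemma card_partition_filter_le_parts {s : Multiset ℕ} (hs : ∀ i ∈ s, 0 < i) {n : ℕ}
    (hn : s.sum ≤ n) :
    (Finset.univ.filter fun l : Nat.Partition n => s ≤ l.parts).card =
      Fintype.card (Nat.Partition (n - s.sum)) := by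
  symm
  refine Finset.card_bij
    (fun l _ => (⟨s + l.parts, fun {i} hi => ?_, ?_⟩ : Nat.Partition n)) ?_ ?_ ?_
  · exact (Multiset.mem_add.1 hi).elim (hs i) l.parts_pos
  · rw [Multiset.sum_add, l.parts_sum, Nat.add_sub_cancel' hn]
  · simp
  · intro l _ l' _ h
    exact Nat.Partition.ext (add_left_cancel (congrArg Nat.Partition.parts h))
  · intro l hl
    have hadd : s + (l.parts - s) = l.parts :=
      add_tsub_cancel_of_le (Finset.mem_filter.1 hl).2
    refine ⟨⟨l.parts - s, fun {i} hi => ?_, ?_⟩, Finset.mem_univ _, Nat.Partition.ext hadd⟩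
    · exact l.parts_pos (Multiset.mem_of_le tsub_le_self hi)
    · have hsum := congrArg Multiset.sum hadd
      rw [Multiset.sum_add, l.parts_sum] at hsum
      omega

lemma partitionCount_monotone : Monotone partitionCount := by
  refine monotone_nat_of_le_succ fun n => ?_
  have hcard := card_partition_filter_le_parts (s := {1}) (n := n + 1) (by simp) (by simp)
  rw [Multiset.sum_singleton, Nat.add_sub_cancel] at hcard
  unfold partitionCount
  exact_mod_cast hcard ▸ Finset.card_le_univ _

lemma count_mul_le_of_partition {n : ℕ} (l : Nat.Partition n) (d : ℕ) :
    l.parts.count d * d ≤ n := by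
  obtain ⟨t, ht⟩ := Multiset.le_iff_exists_add.1
    (Multiset.le_count_iff_replicate_le.1 (le_refl (l.parts.count d)))
  have hsum := congrArg Multiset.sum ht
  rw [l.parts_sum, Multiset.sum_add, Multiset.sum_replicate, smul_eq_mul] at hsum
  omega

lemma card_partition_filter_le_count (n j : ℕ) {d : ℕ} (hd : 0 < d) :
    ((Finset.univ.filter fun l : Nat.Partition n => j ≤ l.parts.count d).card : ℝ) =
      lag partitionCount n (d * j) := by
  have hsum : (Multiset.replicate j d).sum = d * j := by
    rw [Multiset.sum_replicate, smul_eq_mul, mul_comm]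
  unfold lag
  split_ifs with h
  · simp only [Multiset.le_count_iff_replicate_le, partitionCount]
    rw [card_partition_filter_le_parts (fun i hi => Multiset.eq_of_mem_replicate hi ▸ hd)
      (hsum.trans_le h), hsum]
  · rw [Nat.cast_eq_zero, Finset.card_eq_zero, Finset.filter_eq_empty_iff]
    intro l _ hl
    refine h (le_trans ?_ (count_mul_le_of_partition l d))
    rw [mul_comm d j]
    gcongr

lemma sum_parts_pow_eq_sum_count {n : ℕ} (l : Nat.Partition n) (m : ℕ) :
    (l.parts.map (fun p => p ^ m)).sum =
      ∑ d ∈ Finset.range n, l.parts.count (d + 1) * (d + 1) ^ m := by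
  have hsub : l.parts.toFinset ⊆ (Finset.range n).map (addRightEmbedding 1) := by
    intro p hp
    have hp := Multiset.mem_toFinset.1 hp
    have hpos := l.parts_pos hp
    have hle := Nat.Partition.le_of_mem_parts hp
    simp only [Finset.mem_map, Finset.mem_range, addRightEmbedding_apply]
    exact ⟨p - 1, by omega, by omega⟩
  rw [Finset.sum_multiset_map_count, Finset.sum_subset hsub fun p _ hp => ?_, Finset.sum_map]
  · simp only [addRightEmbedding_apply, smul_eq_mul]
  · rw [Multiset.count_eq_zero_of_notMem (by simpa using hp), zero_smul]

lemma count_eq_sum_ite {n : ℕ} (l : Nat.Partition n) {d : ℕ} (hd : 0 < d) :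
    l.parts.count d = ∑ j ∈ Finset.range n, if j + 1 ≤ l.parts.count d then 1 else 0 := by
  have hle : l.parts.count d ≤ n :=
    (Nat.le_mul_of_pos_right _ hd).trans (count_mul_le_of_partition l d)
  have hfilter : (Finset.range n).filter (fun j => j + 1 ≤ l.parts.count d) =
      Finset.range (l.parts.count d) := by
    ext j
    simp only [Finset.mem_filter, Finset.mem_range]
    omega
  rw [← Finset.card_filter, hfilter, Finset.card_range]

lemma sum_count_partition (n : ℕ) {d : ℕ} (hd : 0 < d) :
    ((∑ l : Nat.Partition n, l.parts.count d : ℕ) : ℝ) =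
      ∑ j ∈ Finset.range n, lag partitionCount n (d * (j + 1)) := by
  simp_rw [← card_partition_filter_le_count n _ hd, Finset.card_filter]
  rw [← Nat.cast_sum, Finset.sum_comm]
  exact congrArg _ (Finset.sum_congr rfl fun l _ => count_eq_sum_ite l hd)

lemma sum_partition_sum_parts_pow (m n : ℕ) :
    ((∑ l : Nat.Partition n, (l.parts.map (fun p => p ^ m)).sum : ℕ) : ℝ) =
      ∑ j ∈ Finset.range n, stridedLagMoment partitionCount m (j + 1) n := by
  simp_rw [sum_parts_pow_eq_sum_count, stridedLagMoment]
  rw [Finset.sum_comm, Finset.sum_comm (s := Finset.range n) (t := Finset.range n), Nat.cast_sum]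
  refine Finset.sum_congr rfl fun d _ => ?_
  rw [← Finset.sum_mul, Nat.cast_mul, sum_count_partition n d.succ_pos, mul_comm,
    Finset.mul_sum]
  push_cast
  rfl

lemma sum_stridedLagMoment_one_partitionCount (n : ℕ) :
    ∑ j ∈ Finset.range n, stridedLagMoment partitionCount 1 (j + 1) n = n * partitionCount n := by
  rw [← sum_partition_sum_parts_pow]
  simp [Nat.Partition.parts_sum, partitionCount, mul_comm]

lemma isBigO_lagMoment_one_partitionCount :
    lagMoment partitionCount 1 =O[atTop] lagMomentScale partitionCount 1 := by
  have hp0 (n : ℕ) : 0 ≤ partitionCount n := (partitionCount_pos n).le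
  refine isBigO_of_le' (c := 1) _ fun n => ?_
  rw [Real.norm_of_nonneg (lagMoment_nonneg hp0 1 n), one_mul, lagMomentScale_one]
  refine le_trans ?_ (Real.le_norm_self _)
  rcases n.eq_zero_or_pos with rfl | hn
  · simp [lagMoment_zero_right]
  · rw [← sum_stridedLagMoment_one_partitionCount, ← stridedLagMoment_one_right]
    exact Finset.single_le_sum (f := fun j => stridedLagMoment partitionCount 1 (j + 1) n)
      (fun j _ => stridedLagMoment_nonneg hp0 1 (j + 1) n) (Finset.mem_range.2 hn)

lemma isEquivalent_lagMoment_one_partitionCount :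
    (fun n => zetaSum 2 * lagMoment partitionCount 1 n) ~[atTop]
      lagMomentScale partitionCount 1 := by
  have hsieve := isLittleO_sum_stridedLagMoment_sub partitionCount_monotone partitionCount_pos
    isBigO_lagMoment_one_partitionCount one_pos
  simp only [sum_stridedLagMoment_one_partitionCount, ← lagMomentScale_one] at hsieve
  exact hsieve.symm

lemma rpow_add_one_div_two_eq_sqrt_div_pow (m n : ℕ) :
    (6 * n / Real.pi ^ 2) ^ (((m : ℝ) + 1) / 2) = (√(n : ℝ) / √(zetaSum 2)) ^ (m + 1) := by
  have hbase : 6 * n / Real.pi ^ 2 = n / zetaSum 2 := by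
    rw [zetaSum_two]
    field_simp
  rw [hbase, Real.rpow_div_two_eq_sqrt _ (div_nonneg n.cast_nonneg (zetaSum_pos one_lt_two).le),
    Real.sqrt_div n.cast_nonneg]
  exact_mod_cast Real.rpow_natCast _ (m + 1)

end Partition

/-- **Asymptotics of the moments of a random partition** (formula (26) of the paper):
for every fixed `m ≥ 1`, as `n → ∞`,
`Σ_{λ ⊢ n} Σ_j λ_j^m ∼ p(n)·(n/ζ(2))^{(m+1)/2}·m!·ζ(m+1)`, with `ζ(2) = π²/6`. -/
theorem moment_statistic_asymptotics (m : ℕ) (hm : 1 ≤ m) :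
    Asymptotics.IsEquivalent atTop
      (fun n : ℕ =>
        ((∑ lam : Nat.Partition n, (lam.parts.map (fun p => p ^ m)).sum : ℕ) : ℝ))
      (fun n : ℕ =>
        (Fintype.card (Nat.Partition n) : ℝ) *
          (6 * n / Real.pi ^ 2) ^ (((m : ℝ) + 1) / 2) *
          (m.factorial : ℝ) * ∑' j : ℕ, (1 : ℝ) / (j + 1) ^ (m + 1)) := by
  simp only [sum_partition_sum_parts_pow, rpow_add_one_div_two_eq_sqrt_div_pow]
  refine (isEquivalent_sum_stridedLagMoment partitionCount_monotone partitionCount_pos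
    (zetaSum_pos one_lt_two) isEquivalent_lagMoment_one_partitionCount hm).congr_right
    (Eventually.of_forall fun n => ?_)
  simp only [lagMomentScale, partitionCount, zetaSum]
  ring
end

section
/- The function a(d) = Σ_{j=1}^∞ j·e^{−jd}/(1 − e^{−jd}) is, for d ∈ (0,∞), a continuous strictly decreasing function with a(d) → ∞ as d → 0⁺ and a(d) → 0 as d → ∞; consequently, for every positive integer n the equation a(d) = n has a unique solution d_n ∈ (0,∞). -/
open Filter Asymptotics Topology

/-- `aFun d = Σ_{j≥1} j·e^{−jd}/(1 − e^{−jd})`, the value of `r·g′(r)/g(r)` at `r = e^{−d}`. -/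
noncomputable def aFun (d : ℝ) : ℝ :=
  ∑' j : ℕ, (j + 1 : ℝ) * Real.exp (-(j + 1) * d) / (1 - Real.exp (-(j + 1) * d))

/-!
Substituting `q = e^{-d}` turns `a` into the Lambert series `Σ_{j ≥ 1} j q ^ j / (1 - q ^ j)`. Every
term is continuous and strictly increasing on `[0, 1)`, so on `[0, r]` the series is dominated by
its value at `r`; hence the sum is continuous and strictly increasing, vanishes at `q = 0`, and
blows up at `q = 1` because a single term does. The same holds for any nonnegative weights, not all
zero, whose power series converges on `[0, 1)`.
-/

section LambertSeries

open Set

section OrderedField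

variable {𝕜 : Type*} [Field 𝕜] [LinearOrder 𝕜] [IsStrictOrderedRing 𝕜]

lemma abs_lt_one_of_mem_Ico {q : 𝕜} (hq : q ∈ Ico 0 1) : |q| < 1 :=
  (abs_of_nonneg hq.1).trans_lt hq.2

lemma strictMonoOn_div_one_sub : StrictMonoOn (fun x : 𝕜 ↦ x / (1 - x)) (Iio 1) := by
  intro x hx y hy hxy
  rw [mem_Iio] at hx hy
  rw [div_lt_div_iff₀ (sub_pos.2 hx) (sub_pos.2 hy)]
  linarith

lemma pow_div_one_sub_pow_nonneg (n : ℕ) {q : 𝕜} (hq : q ∈ Ico 0 1) : 0 ≤ q ^ n / (1 - q ^ n) :=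
  div_nonneg (pow_nonneg hq.1 n) (sub_nonneg.2 (pow_le_one₀ hq.1 hq.2.le))

variable {n : ℕ}

lemma strictMonoOn_pow_div_one_sub_pow (hn : n ≠ 0) :
    StrictMonoOn (fun q : 𝕜 ↦ q ^ n / (1 - q ^ n)) (Ico 0 1) :=
  strictMonoOn_div_one_sub.comp
    (fun _ hx _ _ hxy ↦ pow_lt_pow_left₀ hxy hx.1 hn) fun _ hq ↦ pow_lt_one₀ hq.1 hq.2 hn

variable [TopologicalSpace 𝕜] [OrderTopology 𝕜]

lemma continuousOn_pow_div_one_sub_pow (hn : n ≠ 0) :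
    ContinuousOn (fun q : 𝕜 ↦ q ^ n / (1 - q ^ n)) (Ico 0 1) :=
  ContinuousOn.div (by fun_prop) (by fun_prop) fun _ hq ↦
    (sub_pos.2 (pow_lt_one₀ hq.1 hq.2 hn)).ne'

lemma tendsto_div_one_sub_nhdsLT_one : Tendsto (fun x : 𝕜 ↦ x / (1 - x)) (𝓝[<] 1) atTop := by
  have one_sub_tendsto : Tendsto (fun x : 𝕜 ↦ 1 - x) (𝓝[<] 1) (𝓝[>] 0) := by
    refine tendsto_nhdsWithin_iff.2 ⟨?_, ?_⟩
    · exact tendsto_nhdsWithin_of_tendsto_nhds (Continuous.tendsto' (by fun_prop) _ _ (sub_self 1))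
    · filter_upwards [self_mem_nhdsWithin] with x hx using sub_pos.2 (mem_Iio.1 hx)
  simp only [div_eq_mul_inv]
  exact (tendsto_nhdsWithin_of_tendsto_nhds tendsto_id).pos_mul_atTop one_pos
    one_sub_tendsto.inv_tendsto_nhdsGT_zero

lemma tendsto_pow_div_one_sub_pow_nhdsLT_one (hn : n ≠ 0) :
    Tendsto (fun q : 𝕜 ↦ q ^ n / (1 - q ^ n)) (𝓝[<] 1) atTop := by
  refine tendsto_div_one_sub_nhdsLT_one.comp (tendsto_nhdsWithin_iff.2 ⟨?_, ?_⟩)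
  · exact tendsto_nhdsWithin_of_tendsto_nhds (Continuous.tendsto' (by fun_prop) _ _ (one_pow n))
  · filter_upwards [Ico_mem_nhdsLT one_pos] with q hq using pow_lt_one₀ hq.1 hq.2 hn

end OrderedField

/-- The Lambert series `Σ_{j ≥ 1} w_j q ^ j / (1 - q ^ j)`, with the weight `w_j` stored as
`a (j - 1)`. For `w_j = j` it is the logarithmic derivative `q g'(q) / g(q)` of the partition
generating function. -/
noncomputable def lambertSeries (a : ℕ → ℝ) (q : ℝ) : ℝ :=
  ∑' n : ℕ, a n * (q ^ (n + 1) / (1 - q ^ (n + 1)))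

variable {a : ℕ → ℝ} {n : ℕ}

lemma lambertSeries_zero : lambertSeries a 0 = 0 := by
  simp [lambertSeries]

lemma summable_lambertSeries {q : ℝ} (hq : |q| < 1) (hsum : Summable fun n ↦ a n * q ^ n) :
    Summable fun n ↦ a n * (q ^ (n + 1) / (1 - q ^ (n + 1))) := by
  have factor_tendsto : Tendsto (fun n : ℕ ↦ q / (1 - q ^ (n + 1))) cofinite (𝓝 (q / (1 - 0))) := by
    rw [Nat.cofinite_eq_atTop]
    exact tendsto_const_nhds.div (((tendsto_pow_atTop_nhds_zero_of_abs_lt_one hq).comp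
      (tendsto_add_atTop_nat 1)).const_sub 1) (by simp)
  refine (hsum.norm.mul_tendsto_const factor_tendsto).congr fun n ↦ ?_
  ring

lemma continuousOn_lambertSeries (ha : ∀ n, 0 ≤ a n)
    (hsum : ∀ q ∈ Ico (0 : ℝ) 1, Summable fun n ↦ a n * q ^ n) :
    ContinuousOn (lambertSeries a) (Ico 0 1) := by
  refine continuousOn_of_locally_continuousOn fun q hq ↦ ?_
  obtain ⟨r, hqr, hr_lt⟩ := exists_between hq.2
  have hr : r ∈ Ico (0 : ℝ) 1 := ⟨hq.1.trans hqr.le, hr_lt⟩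
  have term_le (n : ℕ) (x : ℝ) (hx : x ∈ Ico 0 1 ∩ Iio r) :
      ‖a n * (x ^ (n + 1) / (1 - x ^ (n + 1)))‖ ≤ a n * (r ^ (n + 1) / (1 - r ^ (n + 1))) := by
    rw [Real.norm_of_nonneg (mul_nonneg (ha n) (pow_div_one_sub_pow_nonneg _ hx.1))]
    exact mul_le_mul_of_nonneg_left
      ((strictMonoOn_pow_div_one_sub_pow n.succ_ne_zero).monotoneOn hx.1 hr hx.2.le) (ha n)
  have term_continuousOn (n : ℕ) : ContinuousOn
      (fun x : ℝ ↦ a n * (x ^ (n + 1) / (1 - x ^ (n + 1)))) (Ico 0 1 ∩ Iio r) :=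
    ((continuousOn_pow_div_one_sub_pow n.succ_ne_zero).mono inter_subset_left).const_mul (a n)
  exact ⟨Iio r, isOpen_Iio, hqr, continuousOn_tsum term_continuousOn
    (summable_lambertSeries (abs_lt_one_of_mem_Ico hr) (hsum r hr)) term_le⟩

lemma strictMonoOn_lambertSeries (ha : ∀ n, 0 ≤ a n) (hn : 0 < a n)
    (hsum : ∀ q ∈ Ico (0 : ℝ) 1, Summable fun n ↦ a n * q ^ n) :
    StrictMonoOn (lambertSeries a) (Ico 0 1) := by
  intro q hq r hr hqr
  have term_lt (m : ℕ) : q ^ (m + 1) / (1 - q ^ (m + 1)) < r ^ (m + 1) / (1 - r ^ (m + 1)) :=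
    strictMonoOn_pow_div_one_sub_pow m.succ_ne_zero hq hr hqr
  exact Summable.tsum_lt_tsum (fun m ↦ mul_le_mul_of_nonneg_left (term_lt m).le (ha m))
    (mul_lt_mul_of_pos_left (term_lt n) hn)
    (summable_lambertSeries (abs_lt_one_of_mem_Ico hq) (hsum q hq))
    (summable_lambertSeries (abs_lt_one_of_mem_Ico hr) (hsum r hr))

lemma tendsto_lambertSeries_nhdsLT_one (ha : ∀ n, 0 ≤ a n) (hn : 0 < a n)
    (hsum : ∀ q ∈ Ico (0 : ℝ) 1, Summable fun n ↦ a n * q ^ n) :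
    Tendsto (lambertSeries a) (𝓝[<] 1) atTop := by
  refine tendsto_atTop_mono' _ ?_
    ((tendsto_pow_div_one_sub_pow_nhdsLT_one n.succ_ne_zero).const_mul_atTop hn)
  filter_upwards [Ico_mem_nhdsLT one_pos] with q hq
  exact (summable_lambertSeries (abs_lt_one_of_mem_Ico hq) (hsum q hq)).le_tsum n fun m _ ↦
    mul_nonneg (ha m) (pow_div_one_sub_pow_nonneg _ hq)

lemma exp_neg_mem_Ico {d : ℝ} (hd : 0 < d) : Real.exp (-d) ∈ Ico 0 1 :=
  ⟨(Real.exp_pos _).le, Real.exp_lt_one_iff.2 (neg_neg_of_pos hd)⟩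

lemma tendsto_exp_neg_nhdsGT_zero : Tendsto (fun d : ℝ ↦ Real.exp (-d)) (𝓝[>] 0) (𝓝[<] 1) := by
  refine tendsto_nhdsWithin_iff.2 ⟨?_, ?_⟩
  · exact tendsto_nhdsWithin_of_tendsto_nhds (Continuous.tendsto' (by fun_prop) _ _ (by simp))
  · filter_upwards [self_mem_nhdsWithin] with d hd using (exp_neg_mem_Ico hd).2

lemma tendsto_exp_neg_atTop_nhdsWithin_Ico :
    Tendsto (fun d : ℝ ↦ Real.exp (-d)) atTop (𝓝[Ico 0 1] 0) := by
  refine tendsto_nhdsWithin_iff.2 ⟨Real.tendsto_exp_neg_atTop_nhds_zero, ?_⟩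
  filter_upwards [eventually_gt_atTop 0] with d hd using exp_neg_mem_Ico hd

lemma existsUnique_eq_of_strictAntiOn_Ioi {α β : Type*}
    [ConditionallyCompleteLinearOrder α] [DenselyOrdered α] [NoMaxOrder α]
    [TopologicalSpace α] [OrderTopology α]
    [LinearOrder β] [TopologicalSpace β] [OrderTopology β] {f : α → β} {b : α} {c y : β}
    (hf : ContinuousOn f (Ioi b)) (hanti : StrictAntiOn f (Ioi b))
    (hb : Tendsto f (𝓝[>] b) atTop) (htop : Tendsto f atTop (𝓝 c)) (hy : c < y) :
    ∃! x, x ∈ Ioi b ∧ f x = y := by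
  obtain ⟨x, hx, hxy⟩ := isPreconnected_Ioi.intermediate_value_Ioi
    (l₂ := 𝓝[>] b) (le_principal_iff.2 (Ioi_mem_atTop b)) inf_le_right hf htop hb hy
  exact ⟨x, ⟨hx, hxy⟩, fun z hz ↦ hanti.injOn hz.1 hx (hz.2.trans hxy.symm)⟩

theorem saddle_point_equation_unique_solution_general (ha : ∀ n, 0 ≤ a n) (hn : 0 < a n)
    (hsum : ∀ q ∈ Ico (0 : ℝ) 1, Summable fun n ↦ a n * q ^ n) :
    ContinuousOn (fun d ↦ lambertSeries a (Real.exp (-d))) (Ioi 0)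
      ∧ StrictAntiOn (fun d ↦ lambertSeries a (Real.exp (-d))) (Ioi 0)
      ∧ Tendsto (fun d ↦ lambertSeries a (Real.exp (-d))) (𝓝[>] 0) atTop
      ∧ Tendsto (fun d ↦ lambertSeries a (Real.exp (-d))) atTop (𝓝 0)
      ∧ ∀ y : ℝ, 0 < y → ∃! d : ℝ, d ∈ Ioi 0 ∧ lambertSeries a (Real.exp (-d)) = y := by
  have hcont : ContinuousOn (fun d ↦ lambertSeries a (Real.exp (-d))) (Ioi 0) :=
    (continuousOn_lambertSeries ha hsum).comp (by fun_prop) fun _ hd ↦ exp_neg_mem_Ico hd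
  have hanti : StrictAntiOn (fun d ↦ lambertSeries a (Real.exp (-d))) (Ioi 0) :=
    (strictMonoOn_lambertSeries ha hn hsum).comp_strictAntiOn
      (fun _ _ _ _ hcd ↦ Real.exp_lt_exp.2 (neg_lt_neg hcd)) fun _ hd ↦ exp_neg_mem_Ico hd
  have hzero : Tendsto (fun d ↦ lambertSeries a (Real.exp (-d))) (𝓝[>] 0) atTop :=
    (tendsto_lambertSeries_nhdsLT_one ha hn hsum).comp tendsto_exp_neg_nhdsGT_zero
  have htop : Tendsto (fun d ↦ lambertSeries a (Real.exp (-d))) atTop (𝓝 0) := by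
    have hcont_zero := continuousOn_lambertSeries ha hsum 0 ⟨le_rfl, one_pos⟩
    rw [ContinuousWithinAt, lambertSeries_zero] at hcont_zero
    exact hcont_zero.comp tendsto_exp_neg_atTop_nhdsWithin_Ico
  exact ⟨hcont, hanti, hzero, htop,
    fun _ hy ↦ existsUnique_eq_of_strictAntiOn_Ioi hcont hanti hzero htop hy⟩

lemma aFun_eq_lambertSeries :
    aFun = fun d ↦ lambertSeries (fun n ↦ (n : ℝ) + 1) (Real.exp (-d)) := by
  funext d
  refine tsum_congr fun n ↦ ?_
  have exp_eq_pow : Real.exp (-((n : ℝ) + 1) * d) = Real.exp (-d) ^ (n + 1) := by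
    rw [← Real.exp_nat_mul]
    push_cast
    ring_nf
  rw [exp_eq_pow, mul_div_assoc]

lemma summable_add_one_mul_pow {q : ℝ} (hq : |q| < 1) :
    Summable fun n : ℕ ↦ ((n : ℝ) + 1) * q ^ n := by
  simpa using summable_choose_mul_geometric_of_norm_lt_one 1 hq

end LambertSeries

/-- On `(0,∞)`, the function `a(d) = Σ_{j≥1} j·e^{−jd}/(1 − e^{−jd})` is continuous and
strictly decreasing, with `a(d) → ∞` as `d → 0⁺` and `a(d) → 0` as `d → ∞`; consequently,
for every positive integer `n` the saddle point equation `a(d) = n` has a unique solution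
`d ∈ (0,∞)`. -/
theorem saddle_point_equation_unique_solution :
    ContinuousOn aFun (Set.Ioi 0)
      ∧ StrictAntiOn aFun (Set.Ioi 0)
      ∧ Tendsto aFun (nhdsWithin 0 (Set.Ioi 0)) atTop
      ∧ Tendsto aFun atTop (nhds 0)
      ∧ ∀ n : ℕ, 0 < n → ∃! d : ℝ, d ∈ Set.Ioi (0 : ℝ) ∧ aFun d = n := by
  obtain ⟨hcont, hanti, hzero, htop, hunique⟩ := saddle_point_equation_unique_solution_general
    (a := fun n ↦ (n : ℝ) + 1) (n := 0) (fun n ↦ by positivity) (by simp)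
    fun q hq ↦ summable_add_one_mul_pow (abs_lt_one_of_mem_Ico hq)
  rw [aFun_eq_lambertSeries]
  exact ⟨hcont, hanti, hzero, htop, fun n hn ↦ hunique n (Nat.cast_pos.2 hn)⟩
end

section
/- Let d_n denote the unique positive solution of Σ_{j=1}^∞ j·e^{−jd}/(1 − e^{−jd}) = n. Then there is a fixed constant β > 0 such that, as n → ∞, d_n = π/√(6n) − 1/(4n) + O(n^{−1−β}). -/
open Filter Asymptotics Topology

/-! Expanding into a double series and summing in the other order gives
`a(d) = Σ_{k≥1} 1/(4 sinh²(kd/2))`. Removing the singular part `1/(kd)²` of each term extracts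
`π²/(6d²)` and leaves `-(1/4) Σ_{k≥1} L'(kd/2)`, where `L(y) = coth y - 1/y` is the Langevin
function. As `L` is concave and increases from `0` to `1`, comparing this Riemann sum with `L`
pins it between `2/d - 1` and `2/d`. So `a(d) = π²/(6d²) - 1/(2d) + O(1)`, and `a(d) = n` is, up to
a bounded error, a quadratic equation in `d`. -/

section HyperbolicInequalities

open Real Set

variable {y : ℝ}

theorem sinh_le_self_mul_cosh (hy : 0 ≤ y) : sinh y ≤ y * cosh y := by
  have h := (convex_Icc 0 y).image_sub_le_mul_sub_of_deriv_le continuous_sinh.continuousOn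
    differentiable_sinh.differentiableOn (C := cosh y) (fun x hx ↦ ?_)
    0 (left_mem_Icc.2 hy) y (right_mem_Icc.2 hy) hy
  · simpa [mul_comm] using h
  · rw [interior_Icc] at hx
    rw [Real.deriv_sinh, cosh_le_cosh, abs_of_pos hx.1, abs_of_nonneg hy]
    exact hx.2.le

theorem cosh_le_one_add_self_mul_sinh (hy : 0 ≤ y) : cosh y ≤ 1 + y * sinh y := by
  have h := (convex_Icc 0 y).image_sub_le_mul_sub_of_deriv_le continuous_cosh.continuousOn
    differentiable_cosh.differentiableOn (C := sinh y) (fun x hx ↦ ?_)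
    0 (left_mem_Icc.2 hy) y (right_mem_Icc.2 hy) hy
  · rw [cosh_zero, sub_zero, mul_comm] at h
    linarith
  · rw [interior_Icc] at hx
    rw [Real.deriv_cosh, sinh_le_sinh]
    exact hx.2.le

theorem three_le_two_mul_rpow_add_rpow {c : ℝ} (hc : 0 < c) :
    3 ≤ 2 * c ^ (2 / 3 : ℝ) + c ^ (-(4 / 3) : ℝ) := by
  have amgm := geom_mean_le_arith_mean2_weighted (w₁ := 2 / 3) (w₂ := 1 / 3)
    (by norm_num) (by norm_num) (rpow_nonneg hc.le (2 / 3)) (rpow_nonneg hc.le (-(4 / 3)))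
    (by norm_num)
  rw [← rpow_mul hc.le, ← rpow_mul hc.le, ← rpow_add hc] at amgm
  norm_num at amgm
  linarith

theorem hasDerivAt_sinh_mul_cosh_rpow_sub_id (x : ℝ) :
    HasDerivAt (fun x ↦ sinh x * cosh x ^ (-(1 / 3) : ℝ) - x)
      ((2 * cosh x ^ (2 / 3 : ℝ) + cosh x ^ (-(4 / 3) : ℝ) - 3) / 3) x := by
  have hc := cosh_pos x
  have h := ((Real.hasDerivAt_sinh x).mul ((Real.hasDerivAt_cosh x).rpow_const
    (p := -(1 / 3)) (Or.inl hc.ne'))).sub (hasDerivAt_id x)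
  refine h.congr_deriv ?_
  have h23 : cosh x ^ (2 / 3 : ℝ) = cosh x ^ 2 * cosh x ^ (-(4 / 3) : ℝ) := by
    rw [← rpow_natCast, ← rpow_add hc]; norm_num
  have h13 : cosh x ^ (-(1 / 3) : ℝ) = cosh x * cosh x ^ (-(4 / 3) : ℝ) := by
    rw [← rpow_one_add' hc.le (by norm_num)]; norm_num
  rw [show (-(1 / 3) - 1 : ℝ) = -(4 / 3) by norm_num, h23, h13]
  linear_combination -(cosh x ^ (-(4 / 3) : ℝ) / 3) * sinh_sq x

/-- Lazarević's inequality. -/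
theorem pow_three_mul_cosh_le_sinh_pow_three (hy : 0 ≤ y) : y ^ 3 * cosh y ≤ sinh y ^ 3 := by
  have mono : Monotone fun x ↦ sinh x * cosh x ^ (-(1 / 3) : ℝ) - x := by
    refine monotone_of_hasDerivAt_nonneg hasDerivAt_sinh_mul_cosh_rpow_sub_id fun x ↦ ?_
    have := three_le_two_mul_rpow_add_rpow (cosh_pos x)
    simp only [Pi.zero_apply]
    linarith
  have hy_le : y ≤ sinh y * cosh y ^ (-(1 / 3) : ℝ) := by simpa using mono hy
  have hcosh : (cosh y ^ (-(1 / 3) : ℝ)) ^ 3 * cosh y = 1 := by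
    rw [← rpow_mul_natCast (cosh_pos y).le]
    norm_num [rpow_neg_one, (cosh_pos y).ne']
  calc y ^ 3 * cosh y
      ≤ (sinh y * cosh y ^ (-(1 / 3) : ℝ)) ^ 3 * cosh y := by gcongr
    _ = sinh y ^ 3 := by rw [mul_pow, mul_assoc, hcosh, mul_one]

end HyperbolicInequalities

section ConcaveRiemannSums

open Set

variable {F F' : ℝ → ℝ} {a h : ℝ}

theorem mul_sum_deriv_le_sub_of_concaveOn (hF : ConcaveOn ℝ (Ici a) F)
    (hF' : ∀ x ∈ Ioi a, HasDerivAt F (F' x) x) (hh : 0 < h) (N : ℕ) :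
    h * ∑ k ∈ Finset.range N, F' (a + (k + 1 : ℕ) * h) ≤ F (a + N * h) - F a := by
  have step (k : ℕ) : h * F' (a + (k + 1 : ℕ) * h) ≤
      F (a + (k + 1 : ℕ) * h) - F (a + k * h) := by
    have hlen : a + (k + 1 : ℕ) * h - (a + k * h) = h := by push_cast; ring
    have hk : a < a + (k + 1 : ℕ) * h := lt_add_of_pos_right a (by positivity)
    have hslope := hF.le_slope_of_hasDerivAt (x := a + k * h)
      (mem_Ici.2 (le_add_of_nonneg_right (by positivity))) (mem_Ici.2 hk.le) (by linarith)
      (hF' _ hk)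
    rwa [slope_def_field, hlen, le_div_iff₀' hh] at hslope
  calc h * ∑ k ∈ Finset.range N, F' (a + (k + 1 : ℕ) * h)
      ≤ ∑ k ∈ Finset.range N, (F (a + (k + 1 : ℕ) * h) - F (a + k * h)) := by
        rw [Finset.mul_sum]; exact Finset.sum_le_sum fun k _ ↦ step k
    _ = F (a + N * h) - F a := by
        rw [Finset.sum_range_sub fun k : ℕ ↦ F (a + k * h)]; simp

theorem sub_le_mul_sum_deriv_of_concaveOn (hF : ConcaveOn ℝ (Ici a) F)
    (hF' : ∀ x ∈ Ioi a, HasDerivAt F (F' x) x) (hh : 0 < h) (N : ℕ) :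
    F (a + (N + 1 : ℕ) * h) - F (a + h) ≤
      h * ∑ k ∈ Finset.range N, F' (a + (k + 1 : ℕ) * h) := by
  have step (k : ℕ) : F (a + (k + 1 + 1 : ℕ) * h) - F (a + (k + 1 : ℕ) * h) ≤
      h * F' (a + (k + 1 : ℕ) * h) := by
    have hlen : a + (k + 1 + 1 : ℕ) * h - (a + (k + 1 : ℕ) * h) = h := by push_cast; ring
    have hk : a < a + (k + 1 : ℕ) * h := lt_add_of_pos_right a (by positivity)
    have hslope := hF.slope_le_of_hasDerivAt (y := a + (k + 1 + 1 : ℕ) * h)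
      (mem_Ici.2 hk.le) (mem_Ici.2 (by linarith)) (by linarith) (hF' _ hk)
    rwa [slope_def_field, hlen, div_le_iff₀' hh] at hslope
  calc F (a + (N + 1 : ℕ) * h) - F (a + h)
      = ∑ k ∈ Finset.range N, (F (a + (k + 1 + 1 : ℕ) * h) - F (a + (k + 1 : ℕ) * h)) := by
        rw [Finset.sum_range_sub fun k : ℕ ↦ F (a + (k + 1 : ℕ) * h)]; simp
    _ ≤ h * ∑ k ∈ Finset.range N, F' (a + (k + 1 : ℕ) * h) := by
        rw [Finset.mul_sum]; exact Finset.sum_le_sum fun k _ ↦ step k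

theorem mul_mem_Icc_of_hasSum_deriv_of_concaveOn (hF : ConcaveOn ℝ (Ici a) F)
    (hF' : ∀ x ∈ Ioi a, HasDerivAt F (F' x) x) (hh : 0 < h) {l S : ℝ}
    (hl : Tendsto F atTop (𝓝 l)) (hS : HasSum (fun k : ℕ ↦ F' (a + (k + 1 : ℕ) * h)) S) :
    h * S ∈ Icc (l - F (a + h)) (l - F a) := by
  have hnodes : Tendsto (fun N : ℕ ↦ F (a + N * h)) atTop (𝓝 l) :=
    hl.comp (tendsto_atTop_add_const_left _ a (tendsto_natCast_atTop_atTop.atTop_mul_const hh))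
  have hsums := hS.tendsto_sum_nat.const_mul h
  exact ⟨le_of_tendsto_of_tendsto' (((tendsto_add_atTop_iff_nat 1).2 hnodes).sub_const _) hsums
      (sub_le_mul_sum_deriv_of_concaveOn hF hF' hh),
    le_of_tendsto_of_tendsto' hsums (hnodes.sub_const _)
      (mul_sum_deriv_le_sub_of_concaveOn hF hF' hh)⟩

end ConcaveRiemannSums

section Langevin

open Real Set

/-- The Langevin function `coth y - 1 / y`. Division by zero gives it the value `0` at `0`, which is
its continuous extension. -/
noncomputable def langevin (y : ℝ) : ℝ := cosh y / sinh y - 1 / y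

variable {y : ℝ}

theorem langevin_zero : langevin 0 = 0 := by simp [langevin]

theorem hasDerivAt_langevin (hy : 0 < y) :
    HasDerivAt langevin (1 / y ^ 2 - 1 / sinh y ^ 2) y := by
  have hs : sinh y ≠ 0 := (sinh_pos_iff.2 hy).ne'
  refine (((Real.hasDerivAt_cosh y).div (Real.hasDerivAt_sinh y) hs).sub
    ((hasDerivAt_const y (1 : ℝ)).div (hasDerivAt_id y) hy.ne')).congr_deriv ?_
  simp only [id]
  field_simp
  linear_combination -y ^ 2 * cosh_sq y

theorem hasDerivAt_deriv_langevin (hy : 0 < y) :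
    HasDerivAt (fun y ↦ 1 / y ^ 2 - 1 / sinh y ^ 2)
      (2 * cosh y / sinh y ^ 3 - 2 / y ^ 3) y := by
  have hs : sinh y ≠ 0 := (sinh_pos_iff.2 hy).ne'
  refine (((hasDerivAt_const y (1 : ℝ)).div ((hasDerivAt_id y).pow 2) (pow_ne_zero 2 hy.ne')).sub
    ((hasDerivAt_const y (1 : ℝ)).div ((Real.hasDerivAt_sinh y).pow 2)
      (pow_ne_zero 2 hs))).congr_deriv ?_
  simp only [id, Pi.pow_apply]
  field_simp
  ring

theorem langevin_mem_Icc (hy : 0 ≤ y) : langevin y ∈ Icc 0 y := by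
  rcases hy.eq_or_lt with rfl | hy'
  · simp [langevin_zero]
  have : 0 < sinh y := sinh_pos_iff.2 hy'
  have hL : langevin y = (y * cosh y - sinh y) / (y * sinh y) := by
    unfold langevin; field_simp
  rw [hL, mem_Icc, le_div_iff₀ (by positivity), div_le_iff₀ (by positivity)]
  constructor
  · linarith [sinh_le_self_mul_cosh hy]
  · calc y * cosh y - sinh y
        ≤ y * (1 + y * sinh y) - y := by
          gcongr
          · exact cosh_le_one_add_self_mul_sinh hy
          · exact self_le_sinh_iff.2 hy
      _ = y * (y * sinh y) := by ring

theorem continuousOn_langevin : ContinuousOn langevin (Ici 0) := by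
  intro y hy
  rcases (mem_Ici.1 hy).eq_or_lt with rfl | hy'
  · rw [ContinuousWithinAt, langevin_zero]
    exact tendsto_of_tendsto_of_tendsto_of_le_of_le' tendsto_const_nhds
      (tendsto_id.mono_left nhdsWithin_le_nhds)
      (eventually_mem_nhdsWithin.mono fun _ hx ↦ (langevin_mem_Icc hx).1)
      (eventually_mem_nhdsWithin.mono fun _ hx ↦ (langevin_mem_Icc hx).2)
  · exact (hasDerivAt_langevin hy').continuousAt.continuousWithinAt

theorem concaveOn_langevin : ConcaveOn ℝ (Ici 0) langevin := by
  refine concaveOn_of_hasDerivWithinAt2_nonpos (convex_Ici 0) continuousOn_langevin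
    (f' := fun y ↦ 1 / y ^ 2 - 1 / sinh y ^ 2)
    (f'' := fun y ↦ 2 * cosh y / sinh y ^ 3 - 2 / y ^ 3) ?_ ?_ ?_ <;>
    rw [interior_Ici] <;> intro y hy
  · exact (hasDerivAt_langevin hy).hasDerivWithinAt
  · exact (hasDerivAt_deriv_langevin hy).hasDerivWithinAt
  · have hy : 0 < y := hy
    have : 0 < sinh y := sinh_pos_iff.2 hy
    rw [sub_nonpos, div_le_div_iff₀ (by positivity) (by positivity)]
    linarith [pow_three_mul_cosh_le_sinh_pow_three hy.le]

theorem tendsto_langevin_atTop : Tendsto langevin atTop (𝓝 1) := by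
  have bounds : ∀ᶠ y : ℝ in atTop, langevin y ∈ Icc (1 - 1 / y) 1 := by
    filter_upwards [eventually_gt_atTop 0] with y hy
    have : 0 < sinh y := sinh_pos_iff.2 hy
    have hL : langevin y = 1 - 1 / y + exp (-y) / sinh y := by
      rw [langevin, ← cosh_sub_sinh]; field_simp; ring
    have hle : exp (-y) / sinh y ≤ 1 / y := by
      gcongr
      · exact exp_le_one_iff.2 (by linarith)
      · exact self_le_sinh_iff.2 hy.le
    have hnonneg : 0 ≤ exp (-y) / sinh y := by positivity
    constructor <;> linarith
  have hlim : Tendsto (fun y : ℝ ↦ 1 - 1 / y) atTop (𝓝 1) := by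
    simpa using tendsto_inv_atTop_zero.const_sub (1 : ℝ)
  exact tendsto_of_tendsto_of_tendsto_of_le_of_le' hlim tendsto_const_nhds
    (bounds.mono fun _ hy ↦ hy.1) (bounds.mono fun _ hy ↦ hy.2)

theorem mul_mem_Icc_of_hasSum_deriv_langevin (hy : 0 < y) {S : ℝ}
    (hS : HasSum (fun k : ℕ ↦
      1 / ((k + 1 : ℕ) * y) ^ 2 - 1 / sinh ((k + 1 : ℕ) * y) ^ 2) S) :
    y * S ∈ Icc (1 - y) 1 := by
  have h := mul_mem_Icc_of_hasSum_deriv_of_concaveOn concaveOn_langevin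
    (F' := fun y ↦ 1 / y ^ 2 - 1 / sinh y ^ 2) (fun _ hx ↦ hasDerivAt_langevin hx) hy
    tendsto_langevin_atTop (by simpa only [zero_add] using hS)
  rw [zero_add, langevin_zero, sub_zero] at h
  exact ⟨(sub_le_sub_left (langevin_mem_Icc hy.le).2 1).trans h.1, h.2⟩

end Langevin

section LambertSeries

theorem hasSum_pow_div_one_sub_pow_sq {𝕜 : Type*} [NontriviallyNormedField 𝕜] [CompleteSpace 𝕜]
    [NormSMulClass ℤ 𝕜] {r : 𝕜} (hr : ‖r‖ < 1) :
    HasSum (fun k : ℕ+ ↦ r ^ (k : ℕ) / (1 - r ^ (k : ℕ)) ^ 2)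
      (∑' j : ℕ+, j * r ^ (j : ℕ) / (1 - r ^ (j : ℕ))) := by
  have hpow (k : ℕ+) : ‖r ^ (k : ℕ)‖ < 1 := by
    rw [norm_pow]; exact pow_lt_one₀ (norm_nonneg _) hr k.ne_zero
  have hrow (k : ℕ+) : HasSum (fun j : ℕ+ ↦ (j : 𝕜) * r ^ (k * j : ℕ))
      (r ^ (k : ℕ) / (1 - r ^ (k : ℕ)) ^ 2) := by
    have h := hasSum_coe_mul_geometric_of_norm_lt_one (hpow k)
    simp only [← pow_mul] at h
    exact (hasSum_pnat_iff (f := fun j : ℕ ↦ (j : 𝕜) * r ^ (k * j : ℕ))).2 (by simpa using h)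
  have hcol (j : ℕ+) : HasSum (fun k : ℕ+ ↦ (j : 𝕜) * r ^ (k * j : ℕ))
      (j * r ^ (j : ℕ) / (1 - r ^ (j : ℕ))) := by
    have h := (hasSum_geometric_of_norm_lt_one (hpow j)).mul_left ((j : 𝕜) * r ^ (j : ℕ))
    rw [← div_eq_mul_inv] at h
    refine (hasSum_pnat_iff_hasSum_succ (f := fun k : ℕ ↦ (j : 𝕜) * r ^ (k * j : ℕ))).2 ?_
    convert! h using 2 with k
    ring
  have hsum := summable_prod_mul_pow 1 hr
  simp only [pow_one] at hsum
  rw [(((Equiv.prodComm ℕ+ ℕ+).hasSum_iff.2 hsum.hasSum).prod_fiberwise hcol).tsum_eq]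
  exact hsum.hasSum.prod_fiberwise hrow

theorem exp_neg_div_one_sub_exp_neg_sq (x : ℝ) :
    Real.exp (-x) / (1 - Real.exp (-x)) ^ 2 = 1 / (4 * Real.sinh (x / 2) ^ 2) := by
  have hfactor : 1 - Real.exp (-x) = 2 * Real.exp (-(x / 2)) * Real.sinh (x / 2) := by
    rw [Real.sinh_eq, show -x = -(x / 2) + -(x / 2) by ring, Real.exp_add]
    have : Real.exp (-(x / 2)) * Real.exp (x / 2) = 1 := by rw [← Real.exp_add]; simp
    linear_combination -this
  have hsq : Real.exp (-x) = Real.exp (-(x / 2)) ^ 2 := by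
    rw [← Real.exp_nat_mul]; congr 1; push_cast; ring
  rw [hfactor, hsq, mul_pow, mul_pow]
  have := (Real.exp_pos (-(x / 2))).ne'
  field_simp
  norm_num

theorem hasSum_one_div_four_mul_sinh_sq {d : ℝ} (hd : 0 < d) :
    HasSum (fun k : ℕ ↦ 1 / (4 * Real.sinh ((k + 1 : ℕ) * (d / 2)) ^ 2)) (aFun d) := by
  have hr : ‖Real.exp (-d)‖ < 1 := by
    rw [Real.norm_of_nonneg (Real.exp_pos _).le]; exact Real.exp_lt_one_iff.2 (by linarith)
  have h := hasSum_pow_div_one_sub_pow_sq hr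
  simp only [← Real.exp_nat_mul, mul_neg] at h
  rw [tsum_pnat_eq_tsum_succ (f := fun j : ℕ ↦
      (j : ℝ) * Real.exp (-(j * d)) / (1 - Real.exp (-(j * d)))),
    hasSum_pnat_iff_hasSum_succ (f := fun k : ℕ ↦
      Real.exp (-(k * d)) / (1 - Real.exp (-(k * d))) ^ 2)] at h
  simp only [exp_neg_div_one_sub_exp_neg_sq, mul_div_assoc] at h
  convert! h using 1
  simp only [aFun, mul_div_assoc, Nat.cast_add_one, neg_mul]

theorem abs_aFun_sub_le {d : ℝ} (hd : 0 < d) :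
    |aFun d - ((Real.pi ^ 2 / 6) / d ^ 2 - 1 / 2 / d)| ≤ 1 / 4 := by
  have hd2 : 0 < d / 2 := half_pos hd
  have hzeta : HasSum (fun k : ℕ ↦ 1 / ((k + 1 : ℕ) * (d / 2)) ^ 2)
      (Real.pi ^ 2 / 6 / (d / 2) ^ 2) := by
    have h : HasSum (fun k : ℕ ↦ 1 / ((k + 1 : ℕ) : ℝ) ^ 2) (Real.pi ^ 2 / 6) := by
      simpa using (hasSum_nat_add_iff' 1).2 hasSum_zeta_two
    simpa only [div_div, mul_pow] using h.div_const ((d / 2) ^ 2)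
  have hL : HasSum (fun k : ℕ ↦ 1 / ((k + 1 : ℕ) * (d / 2)) ^ 2 -
      1 / Real.sinh ((k + 1 : ℕ) * (d / 2)) ^ 2)
      (Real.pi ^ 2 / 6 / (d / 2) ^ 2 - 4 * aFun d) := by
    convert! hzeta.sub ((hasSum_one_div_four_mul_sinh_sq hd).mul_left 4) using 3
    field_simp
  obtain ⟨hlower, hupper⟩ := mul_mem_Icc_of_hasSum_deriv_langevin hd2 hL
  have herror : 1 - d / 2 * (Real.pi ^ 2 / 6 / (d / 2) ^ 2 - 4 * aFun d) =
      2 * d * (aFun d - (Real.pi ^ 2 / 6 / d ^ 2 - 1 / 2 / d)) := by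
    field_simp; ring
  have h2d : 0 < 2 * d := by positivity
  rw [abs_of_nonneg (nonneg_of_mul_nonneg_right (by linarith) h2d)]
  exact le_of_mul_le_mul_left (by linarith) h2d

end LambertSeries

section Inversion

variable {b c d K n : ℝ}

theorem sub_mul_eq_of_mul_sq_add_mul_eq {s E : ℝ} (hs : s ≠ 0)
    (h : s ^ 2 * d ^ 2 + b * d = c ^ 2 + E * d ^ 2) :
    (d - (c / s - b / (2 * s ^ 2))) * (s ^ 2 * (s ^ 2 * d + c * s + b / 2)) =
      E * (s ^ 2 * d ^ 2) + b ^ 2 / 4 := by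
  field_simp
  linear_combination 16 * s ^ 2 * h

theorem abs_sub_le_of_abs_sub_div_sq_le (hc : 0 < c) (hb : 0 ≤ b) (hd : 0 < d) (hn : 0 < n)
    (hK : 2 * K ≤ n) (h : |n - (c ^ 2 / d ^ 2 - b / d)| ≤ K) :
    |d - (c / √n - b / (2 * n))| ≤ (2 * K * c + b ^ 2 / (4 * c)) / (n * √n) := by
  obtain ⟨s, hs, rfl⟩ : ∃ s, 0 < s ∧ n = s ^ 2 := ⟨√n, by positivity, (Real.sq_sqrt hn.le).symm⟩
  rw [Real.sqrt_sq hs.le]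
  set E := s ^ 2 - (c ^ 2 / d ^ 2 - b / d) with hE
  have hquad : s ^ 2 * d ^ 2 + b * d = c ^ 2 + E * d ^ 2 := by rw [hE]; field_simp; ring
  have hsd : s ^ 2 * d ^ 2 ≤ 2 * c ^ 2 := by
    have hEd : E * d ^ 2 ≤ s ^ 2 / 2 * d ^ 2 := by
      gcongr; linarith [le_abs_self E]
    nlinarith [mul_nonneg hb hd.le]
  have hnum : |E * (s ^ 2 * d ^ 2) + b ^ 2 / 4| ≤ K * (2 * c ^ 2) + b ^ 2 / 4 := by
    refine (abs_add_le _ _).trans ?_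
    rw [abs_mul, abs_of_nonneg (show 0 ≤ s ^ 2 * d ^ 2 by positivity),
      abs_of_nonneg (show 0 ≤ b ^ 2 / 4 by positivity)]
    have := (abs_nonneg E).trans h
    gcongr
  have hden : c * s ^ 3 ≤ s ^ 2 * (s ^ 2 * d + c * s + b / 2) := by
    have : 0 ≤ s ^ 2 * (s ^ 2 * d + b / 2) := by positivity
    linarith
  rw [← sub_mul_eq_of_mul_sq_add_mul_eq hs.ne' hquad, abs_mul] at hnum
  have hmul : |d - (c / s - b / (2 * s ^ 2))| * (c * s ^ 3) ≤ K * (2 * c ^ 2) + b ^ 2 / 4 :=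
    (mul_le_mul_of_nonneg_left (hden.trans (le_abs_self _)) (abs_nonneg _)).trans hnum
  rw [← le_div_iff₀ (by positivity)] at hmul
  exact hmul.trans_eq (by field_simp)

end Inversion

/-- **Asymptotic expansion of the saddle point** (formula (19) of the paper): if `d_n` is
the unique positive solution of `Σ_{j≥1} j·e^{−jd}/(1 − e^{−jd}) = n`, then there is a
fixed `β > 0` such that `d_n = π/√(6n) − 1/(4n) + O(n^{−1−β})` as `n → ∞`. -/
theorem saddle_point_asymptotics (d : ℕ → ℝ)
    (hd : ∀ n : ℕ, 0 < n → 0 < d n ∧ aFun (d n) = n) :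
    ∃ β : ℝ, 0 < β ∧
      (fun n : ℕ => d n - (Real.pi / Real.sqrt (6 * n) - 1 / (4 * n)))
        =O[atTop] (fun n : ℕ => (n : ℝ) ^ (-1 - β)) := by
  set c := Real.pi / √6 with hc
  have hc2 : c ^ 2 = Real.pi ^ 2 / 6 := by rw [hc, div_pow, Real.sq_sqrt (by norm_num)]
  refine ⟨1 / 2, by norm_num, .of_bound (2 * (1 / 4) * c + (1 / 2) ^ 2 / (4 * c)) ?_⟩
  filter_upwards [eventually_ge_atTop 1] with n hn
  obtain ⟨hd_pos, hdn⟩ := hd n hn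
  have hn1 : (1 : ℝ) ≤ n := by exact_mod_cast hn
  have herror : |(n : ℝ) - (c ^ 2 / d n ^ 2 - 1 / 2 / d n)| ≤ 1 / 4 := by
    rw [hc2, ← hdn]; exact abs_aFun_sub_le hd_pos
  have hrpow : (n : ℝ) ^ (-1 - 1 / 2 : ℝ) = 1 / (n * √n) := by
    rw [Real.rpow_sub (by positivity), Real.rpow_neg_one, ← Real.sqrt_eq_rpow]; field_simp
  have hmain := abs_sub_le_of_abs_sub_div_sq_le (by positivity) (by norm_num) hd_pos
    (by positivity) (by linarith) herror
  rw [hrpow, Real.norm_of_nonneg (by positivity : (0 : ℝ) ≤ 1 / (n * √n)), mul_one_div,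
    Real.norm_eq_abs, Real.sqrt_mul (by norm_num), ← div_div, ← hc]
  convert! hmain using 4
  ring
end

section
/- As d → 0⁺, Σ_{j=1}^∞ j²·e^{−jd}/(1 − e^{−jd})² = 2ζ(2)·d^{−3} + O(d^{−2}). In particular, with d = d_n the unique positive solution of Σ_{j=1}^∞ j·e^{−jd}/(1 − e^{−jd}) = n, one has Σ_{j=1}^∞ j²·e^{−j d_n}/(1 − e^{−j d_n})² ∼ (2√6/π)·n^{3/2} as n → ∞. -/
open Filter Asymptotics Topology

/-- `bFun d = Σ_{j≥1} j²·e^{−jd}/(1 − e^{−jd})²`. -/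
noncomputable def bFun (d : ℝ) : ℝ :=
  ∑' j : ℕ, (j + 1 : ℝ) ^ 2 * Real.exp (-(j + 1) * d) / (1 - Real.exp (-(j + 1) * d)) ^ 2

/-!
Up to a power of `t`, both series are Riemann sums of mesh `t`:
`t² a(t) = t ∑ ψ(jt)` with `ψ(x) = x / (eˣ - 1)`, and
`t³ b(t) = t ∑ φ(jt)` with `φ(x) = ((x/2) / sinh (x/2))²`.
Since `eˣ - 1` and `sinh` are convex and vanish at `0`, the functions `ψ` and `φ` decrease from `1`
to `0`, so each Riemann sum differs from the integral over `(0, ∞)` by at most `t`. Expanding in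
powers of `e⁻ˣ` and integrating termwise gives `∫ ψ = ζ(2)` and `∫ φ = 2ζ(2)`. Eliminating `t`
between the two leading terms yields `b ∼ (2√6/π) a^{3/2}`, which is evaluated along `d n → 0⁺`.
-/

open Set MeasureTheory

section IntegralTest

variable {f : ℝ → ℝ} {M : ℝ}

theorem antitoneOn_update_Ici_of_antitoneOn_Ioi {a : ℝ} (hf : AntitoneOn f (Ioi a))
    (hM : ∀ x ∈ Ioi a, f x ≤ M) : AntitoneOn (Function.update f a M) (Ici a) := by
  intro x hx y hy hxy
  rcases eq_or_lt_of_le (mem_Ici.1 hy) with rfl | hay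
  · rw [le_antisymm hxy hx]
  rw [Function.update_of_ne hay.ne']
  rcases eq_or_lt_of_le (mem_Ici.1 hx) with rfl | hax
  · simpa using hM y hay
  · simpa [Function.update_of_ne hax.ne'] using hf hax hay hxy

theorem integral_Ioi_sub_tsum_mem_Icc (hf : AntitoneOn f (Ioi 0)) (hf0 : ∀ x ∈ Ioi 0, 0 ≤ f x)
    (hM : ∀ x ∈ Ioi 0, f x ≤ M) (hint : IntegrableOn f (Ioi 0)) :
    (∫ x in Ioi 0, f x) - ∑' n : ℕ, f (n + 1) ∈ Icc 0 M := by
  set g := Function.update f 0 M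
  have hgf : EqOn g f (Ioi 0) := fun x hx => Function.update_of_ne (ne_of_gt hx) _ _
  have hg : AntitoneOn g (Ici 0) := antitoneOn_update_Ici_of_antitoneOn_Ioi hf hM
  have hg0 : ∀ x ∈ Ioi 0, 0 ≤ g x := fun x hx => (hgf hx).symm ▸ hf0 x hx
  have hgint : IntegrableOn g (Ioi 0) := hint.congr_fun hgf.symm measurableSet_Ioi
  have hgsum : Summable fun n : ℕ => g n := hg.summable_of_integrableOn_Ioi_zero hgint hg0
  have hintegral : ∫ x in Ioi 0, g x = ∫ x in Ioi 0, f x :=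
    setIntegral_congr_fun measurableSet_Ioi hgf
  have htsum : ∑' n : ℕ, g (n + 1 : ℕ) = ∑' n : ℕ, f (n + 1) :=
    tsum_congr fun n => by rw [hgf (mem_Ioi.2 (by positivity)), Nat.cast_add_one]
  have hupper := hg.integral_le_tsum hgsum hg0
  have hlower := hg.tsum_add_one_le_integral hgint hg0
  rw [hgsum.tsum_eq_zero_add, Nat.cast_zero, show g 0 = M from Function.update_self ..] at hupper
  rw [hintegral, htsum] at hupper hlower
  constructor <;> linarith

theorem integral_Ioi_sub_mul_tsum_mem_Icc (hf : AntitoneOn f (Ioi 0)) (hf0 : ∀ x ∈ Ioi 0, 0 ≤ f x)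
    (hM : ∀ x ∈ Ioi 0, f x ≤ M) (hint : IntegrableOn f (Ioi 0)) {t : ℝ} (ht : 0 < t) :
    (∫ x in Ioi 0, f x) - t * ∑' n : ℕ, f ((n + 1) * t) ∈ Icc 0 (M * t) := by
  have hmem : ∀ x ∈ Ioi (0 : ℝ), x * t ∈ Ioi 0 := fun x hx => mul_pos hx ht
  have hscaled := integral_Ioi_sub_tsum_mem_Icc (f := fun x => f (x * t))
    (fun x hx y hy hxy => hf (hmem x hx) (hmem y hy) (by gcongr))
    (fun x hx => hf0 _ (hmem x hx)) (fun x hx => hM _ (hmem x hx))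
    ((integrableOn_Ioi_comp_mul_right_iff f 0 ht).2 (by simpa using hint))
  rw [integral_comp_mul_right_Ioi f 0 ht, zero_mul, smul_eq_mul] at hscaled
  have hfactor : (∫ x in Ioi 0, f x) - t * ∑' n : ℕ, f ((n + 1) * t)
      = (t⁻¹ * (∫ x in Ioi 0, f x) - ∑' n : ℕ, f ((n + 1) * t)) * t := by
    field_simp
  rw [hfactor]
  exact ⟨mul_nonneg hscaled.1 ht.le, mul_le_mul_of_nonneg_right hscaled.2 ht.le⟩

end IntegralTest

theorem antitoneOn_div_of_convexOn {f : ℝ → ℝ} (hf : ConvexOn ℝ (Ici 0) f) (hf0 : f 0 = 0)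
    (hpos : ∀ x ∈ Ioi 0, 0 < f x) : AntitoneOn (fun x => x / f x) (Ioi 0) := by
  intro x hx y hy hxy
  have hslope := hf.secant_mono (a := 0) self_mem_Ici (Ioi_subset_Ici_self hx)
    (Ioi_subset_Ici_self hy) (ne_of_gt hx) (ne_of_gt hy) hxy
  rw [hf0, sub_zero, sub_zero, sub_zero, sub_zero] at hslope
  simpa only [inv_div] using inv_anti₀ (div_pos (hpos x hx) hx) hslope

theorem convexOn_sinh_Ici : ConvexOn ℝ (Ici 0) Real.sinh := by
  refine convexOn_of_deriv2_nonneg (convex_Ici 0) Real.continuous_sinh.continuousOn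
    Real.differentiable_sinh.differentiableOn
    (by simpa using Real.differentiable_cosh.differentiableOn) fun x hx => ?_
  rw [interior_Ici] at hx
  simpa using le_of_lt hx

open Nat in
theorem hasSum_integral_pow_mul_of_hasSum_exp {ι : Type*} [Countable ι] {a p : ι → ℝ} {F : ℝ → ℝ}
    (m : ℕ) (hp : ∀ i, a i = 0 ∨ 0 < p i)
    (hF : ∀ x ∈ Ioi 0, HasSum (fun i => a i * Real.exp (-p i * x)) (F x))
    (hsum : Summable fun i => |a i| / p i ^ (m + 1)) :
    HasSum (fun i => m ! * (a i / p i ^ (m + 1))) (∫ x in Ioi 0, x ^ m * F x) := by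
  have hmellin := hasSum_mellin (a := fun i => (a i : ℂ)) (p := p) (F := fun x => (F x : ℂ))
    (s := (m + 1 : ℕ)) (by simpa using hp)
    (by rw [Complex.natCast_re]; positivity)
    (fun x hx => mod_cast hF x hx) (by simpa [← Real.rpow_natCast] using hsum)
  have hintegral : mellin (fun x => (F x : ℂ)) (m + 1 : ℕ)
      = ((∫ x in Ioi 0, x ^ m * F x : ℝ) : ℂ) := by
    simp [mellin, ← integral_complex_ofReal]
  rw [hintegral] at hmellin
  simp only [mul_div_assoc, Nat.cast_add_one, Complex.Gamma_nat_eq_factorial] at hmellin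
  exact_mod_cast hmellin

theorem hasSum_one_div_succ_sq : HasSum (fun k : ℕ => 1 / (k + 1 : ℝ) ^ 2) (Real.pi ^ 2 / 6) := by
  simpa using (hasSum_nat_add_iff' 1).2 hasSum_zeta_two

theorem hasSum_exp_neg_succ_mul {x : ℝ} (hx : 0 < x) :
    HasSum (fun k : ℕ => Real.exp (-(k + 1) * x)) (Real.exp (-x) / (1 - Real.exp (-x))) := by
  have hgeom := (hasSum_geometric_of_lt_one (Real.exp_nonneg (-x)) (by simpa using hx)).mul_left
    (Real.exp (-x))
  refine hgeom.congr_fun fun k => ?_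
  rw [← Real.exp_nat_mul, ← Real.exp_add]
  ring_nf

theorem hasSum_mul_exp_neg_mul {x : ℝ} (hx : 0 < x) :
    HasSum (fun k : ℕ => (k : ℝ) * Real.exp (-k * x))
      (Real.exp (-x) / (1 - Real.exp (-x)) ^ 2) := by
  have hnorm : ‖Real.exp (-x)‖ < 1 := by simpa using hx
  refine (hasSum_coe_mul_geometric_of_norm_lt_one hnorm).congr_fun fun k => ?_
  rw [← Real.exp_nat_mul]
  ring_nf

section LeadingTerm

variable {f : ℝ → ℝ} {c : ℝ} {m : ℕ}

theorem isBigO_self_of_forall_mem_Icc (hf : ∀ t > 0, f t ∈ Icc 0 t) : f =O[𝓝[>] 0] fun t => t := by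
  refine .of_norm_eventuallyLE ?_
  filter_upwards [self_mem_nhdsWithin] with t ht
  rw [Real.norm_of_nonneg (hf t ht).1]
  exact (hf t ht).2

theorem isBigO_sub_div_pow (hf : (fun t => c - t ^ (m + 1) * f t) =O[𝓝[>] 0] fun t => t) :
    (fun t => f t - c / t ^ (m + 1)) =O[𝓝[>] 0] fun t => 1 / t ^ m := by
  refine (hf.neg_left.mul (isBigO_refl (fun t : ℝ => 1 / t ^ (m + 1)) _)).congr' ?_ ?_
  all_goals
    filter_upwards [self_mem_nhdsWithin] with t ht
    have ht0 : t ≠ 0 := ne_of_gt ht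
    field_simp
    ring

theorem isEquivalent_div_pow (hc : c ≠ 0)
    (hf : (fun t => f t - c / t ^ (m + 1)) =O[𝓝[>] 0] fun t => 1 / t ^ m) :
    f ~[𝓝[>] 0] fun t => c / t ^ (m + 1) := by
  refine hf.trans_isLittleO ?_
  have hid : (fun t : ℝ => t) =o[𝓝[>] 0] fun _ => c :=
    (isLittleO_const_iff hc).2 (tendsto_id.mono_left nhdsWithin_le_nhds)
  refine (hid.mul_isBigO (isBigO_refl (fun t : ℝ => 1 / t ^ (m + 1)) _)).congr' ?_ ?_
  · filter_upwards [self_mem_nhdsWithin] with t ht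
    have ht0 : t ≠ 0 := ne_of_gt ht
    field_simp
    ring
  · exact .of_forall fun t => mul_one_div _ _

end LeadingTerm

/-- `x / (eˣ - 1)`, written so that the `j`-th term of `aFun t` is `t⁻¹ * meanProfile (j * t)`.
The value at `0` is the junk value `0` instead of the limit `1`. -/
noncomputable def meanProfile (x : ℝ) : ℝ :=
  x * Real.exp (-x) / (1 - Real.exp (-x))

/-- `((x/2) / sinh (x/2))²`, written so that the `j`-th term of `bFun t` is
`(t⁻¹) ^ 2 * varianceProfile (j * t)`. The value at `0` is the junk value `0` instead of the
limit `1`. -/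
noncomputable def varianceProfile (x : ℝ) : ℝ :=
  x ^ 2 * Real.exp (-x) / (1 - Real.exp (-x)) ^ 2

theorem meanProfile_eq_div_exp_sub_one (x : ℝ) : meanProfile x = x / (Real.exp x - 1) := by
  have hexp : Real.exp x - 1 = (1 - Real.exp (-x)) / Real.exp (-x) := by
    rw [sub_div, div_self (Real.exp_pos _).ne', one_div, Real.exp_neg, inv_inv]
  rw [meanProfile, hexp, div_div_eq_mul_div]

theorem varianceProfile_eq_div_sinh_sq (x : ℝ) :
    varianceProfile x = (x / 2 / Real.sinh (x / 2)) ^ 2 := by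
  have hsq : Real.exp (-x) = Real.exp (-(x / 2)) ^ 2 := by
    rw [← Real.exp_nat_mul]; congr 1; push_cast; ring
  have hsinh : 1 - Real.exp (-x) = 2 * Real.sinh (x / 2) * Real.exp (-(x / 2)) := by
    have hinv : Real.exp (x / 2) * Real.exp (-(x / 2)) = 1 := by rw [← Real.exp_add]; simp
    rw [Real.sinh_eq, hsq]
    linear_combination -hinv
  rw [varianceProfile, hsinh, hsq, mul_pow, mul_div_mul_right _ _ (by positivity)]
  ring

theorem exp_sub_one_pos {x : ℝ} (hx : 0 < x) : 0 < Real.exp x - 1 :=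
  sub_pos.2 (Real.one_lt_exp_iff.2 hx)

theorem meanProfile_mem_Icc {x : ℝ} (hx : 0 < x) : meanProfile x ∈ Icc 0 1 := by
  have hpos := exp_sub_one_pos hx
  rw [meanProfile_eq_div_exp_sub_one]
  exact ⟨by positivity, (div_le_one hpos).2 (by linarith [Real.add_one_le_exp x])⟩

theorem antitoneOn_meanProfile : AntitoneOn meanProfile (Ioi 0) := by
  have hconvex : ConvexOn ℝ (Ici 0) fun x => Real.exp x - 1 :=
    (convexOn_exp.subset (subset_univ _) (convex_Ici 0)).sub (concaveOn_const 1 (convex_Ici 0))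
  refine (antitoneOn_div_of_convexOn hconvex (by simp) fun x hx => exp_sub_one_pos hx).congr ?_
  exact fun x _ => (meanProfile_eq_div_exp_sub_one x).symm

theorem varianceProfile_mem_Icc {x : ℝ} (hx : 0 < x) : varianceProfile x ∈ Icc 0 1 := by
  have hhalf : 0 < x / 2 := half_pos hx
  have hpos : 0 < Real.sinh (x / 2) := Real.sinh_pos_iff.2 hhalf
  rw [varianceProfile_eq_div_sinh_sq]
  exact ⟨by positivity, pow_le_one₀ (by positivity)
    ((div_le_one hpos).2 (Real.self_le_sinh_iff.2 hhalf.le))⟩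

theorem antitoneOn_varianceProfile : AntitoneOn varianceProfile (Ioi 0) := by
  have hdiv : AntitoneOn (fun x => x / Real.sinh x) (Ioi 0) :=
    antitoneOn_div_of_convexOn convexOn_sinh_Ici Real.sinh_zero fun x hx => Real.sinh_pos_iff.2 hx
  intro x (hx : 0 < x) y (hy : 0 < y) hxy
  have hpos : 0 < Real.sinh (y / 2) := Real.sinh_pos_iff.2 (half_pos hy)
  simp only [varianceProfile_eq_div_sinh_sq]
  exact pow_le_pow_left₀ (div_nonneg (half_pos hy).le hpos.le)
    (hdiv (mem_Ioi.2 (half_pos hx)) (mem_Ioi.2 (half_pos hy)) (by gcongr)) 2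

theorem integral_meanProfile : ∫ x in Ioi 0, meanProfile x = Real.pi ^ 2 / 6 := by
  have hsum := hasSum_integral_pow_mul_of_hasSum_exp (a := fun _ : ℕ => 1) (p := fun k => k + 1) 1
    (fun k => Or.inr (by positivity)) (fun x hx => by simpa using hasSum_exp_neg_succ_mul hx)
    (by simpa using hasSum_one_div_succ_sq.summable)
  calc ∫ x in Ioi 0, meanProfile x
      = ∫ x in Ioi 0, x ^ 1 * (Real.exp (-x) / (1 - Real.exp (-x))) := by
        simp only [meanProfile, pow_one, mul_div_assoc]
    _ = Real.pi ^ 2 / 6 := hsum.unique (by simpa using hasSum_one_div_succ_sq)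

theorem integral_varianceProfile : ∫ x in Ioi 0, varianceProfile x = 2 * (Real.pi ^ 2 / 6) := by
  have hterm (k : ℕ) : (k : ℝ) / k ^ (2 + 1) = 1 / k ^ 2 := by
    rcases eq_or_ne k 0 with rfl | hk
    · simp
    · field_simp
  have hsum := hasSum_integral_pow_mul_of_hasSum_exp (a := fun k : ℕ => (k : ℝ)) (p := fun k => k) 2
    (fun k => k.eq_zero_or_pos.imp (by simp) (by simp)) (fun x hx => hasSum_mul_exp_neg_mul hx)
    (by simpa only [Nat.abs_cast, hterm] using hasSum_zeta_two.summable)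
  simp only [hterm, Nat.factorial_two, Nat.cast_ofNat] at hsum
  calc ∫ x in Ioi 0, varianceProfile x
      = ∫ x in Ioi 0, x ^ 2 * (Real.exp (-x) / (1 - Real.exp (-x)) ^ 2) := by
        simp only [varianceProfile, mul_div_assoc]
    _ = 2 * (Real.pi ^ 2 / 6) := hsum.unique (hasSum_zeta_two.mul_left 2)

theorem integrableOn_meanProfile : IntegrableOn meanProfile (Ioi 0) :=
  .of_integral_ne_zero (by rw [integral_meanProfile]; positivity)

theorem integrableOn_varianceProfile : IntegrableOn varianceProfile (Ioi 0) :=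
  .of_integral_ne_zero (by rw [integral_varianceProfile]; positivity)

theorem sq_mul_aFun (t : ℝ) : t ^ 2 * aFun t = t * ∑' n : ℕ, meanProfile ((n + 1) * t) := by
  rw [aFun, sq, mul_assoc, ← tsum_mul_left]
  congr! 3 with n
  rw [meanProfile, neg_mul]
  ring

theorem cube_mul_bFun (t : ℝ) : t ^ 3 * bFun t = t * ∑' n : ℕ, varianceProfile ((n + 1) * t) := by
  rw [bFun, pow_succ', mul_assoc, ← tsum_mul_left]
  congr! 3 with n
  rw [varianceProfile, neg_mul]
  ring

theorem sub_sq_mul_aFun_mem_Icc {t : ℝ} (ht : 0 < t) :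
    Real.pi ^ 2 / 6 - t ^ 2 * aFun t ∈ Icc 0 t := by
  simpa [sq_mul_aFun, integral_meanProfile] using
    integral_Ioi_sub_mul_tsum_mem_Icc antitoneOn_meanProfile
      (fun x hx => (meanProfile_mem_Icc hx).1) (fun x hx => (meanProfile_mem_Icc hx).2)
      integrableOn_meanProfile ht

theorem sub_cube_mul_bFun_mem_Icc {t : ℝ} (ht : 0 < t) :
    2 * (Real.pi ^ 2 / 6) - t ^ 3 * bFun t ∈ Icc 0 t := by
  simpa [cube_mul_bFun, integral_varianceProfile] using
    integral_Ioi_sub_mul_tsum_mem_Icc antitoneOn_varianceProfile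
      (fun x hx => (varianceProfile_mem_Icc hx).1) (fun x hx => (varianceProfile_mem_Icc hx).2)
      integrableOn_varianceProfile ht

theorem isBigO_bFun_sub :
    (fun t => bFun t - 2 * (Real.pi ^ 2 / 6) / t ^ 3) =O[𝓝[>] 0] fun t => 1 / t ^ 2 :=
  isBigO_sub_div_pow <| isBigO_self_of_forall_mem_Icc fun _ ht => sub_cube_mul_bFun_mem_Icc ht

theorem isEquivalent_bFun : bFun ~[𝓝[>] 0] fun t => 2 * (Real.pi ^ 2 / 6) / t ^ 3 :=
  isEquivalent_div_pow (by positivity) isBigO_bFun_sub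

theorem isEquivalent_aFun : aFun ~[𝓝[>] 0] fun t => Real.pi ^ 2 / 6 / t ^ 2 :=
  isEquivalent_div_pow (by positivity) <| isBigO_sub_div_pow <|
    isBigO_self_of_forall_mem_Icc fun _ ht => sub_sq_mul_aFun_mem_Icc ht

theorem two_sqrt_six_div_pi_mul_rpow_three_halves {t : ℝ} (ht : 0 < t) :
    (2 * √6 / Real.pi) * (Real.pi ^ 2 / 6 / t ^ 2) ^ ((3 : ℝ) / 2)
      = 2 * (Real.pi ^ 2 / 6) / t ^ 3 := by
  have hsqrt : (Real.pi ^ 2 / 6 / t ^ 2) ^ ((3 : ℝ) / 2) = (Real.pi / √6 / t) ^ 3 := by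
    have hsq : Real.pi ^ 2 / 6 / t ^ 2 = (Real.pi / √6 / t) ^ 2 := by
      rw [div_pow, div_pow, Real.sq_sqrt (by norm_num)]
    rw [hsq, ← Real.rpow_natCast_mul (by positivity), ← Real.rpow_natCast]
    norm_num
  have hsix : √6 ^ 2 = 6 := Real.sq_sqrt (by norm_num)
  rw [hsqrt]
  field_simp
  linear_combination -hsix

theorem isEquivalent_bFun_aFun_rpow :
    bFun ~[𝓝[>] 0] fun t => (2 * √6 / Real.pi) * aFun t ^ ((3 : ℝ) / 2) := by
  have hpow := isEquivalent_aFun.rpow (r := 3 / 2) (fun t => by positivity)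
  refine isEquivalent_bFun.trans (((IsEquivalent.refl
    (u := fun _ => 2 * √6 / Real.pi)).mul hpow).symm.congr_left ?_)
  filter_upwards [self_mem_nhdsWithin] with t ht using two_sqrt_six_div_pi_mul_rpow_three_halves ht

theorem tendsto_nhdsGT_zero_of_aFun_tendsto_atTop {α : Type*} {l : Filter α} {d : α → ℝ}
    (hd : ∀ᶠ n in l, 0 < d n) (ha : Tendsto (fun n => aFun (d n)) l atTop) :
    Tendsto d l (𝓝[>] 0) := by
  have hsq : Tendsto (fun n => d n ^ 2) l (𝓝 0) := by
    refine squeeze_zero' (.of_forall fun n => sq_nonneg _) ?_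
      (ha.const_div_atTop (Real.pi ^ 2 / 6))
    filter_upwards [hd, ha.eventually_gt_atTop 0] with n hdn han
    exact (le_div_iff₀ han).2 (sub_nonneg.1 (sub_sq_mul_aFun_mem_Icc hdn).1)
  have hsqrt : Tendsto (fun n => √(d n ^ 2)) l (𝓝 0) := by simpa using hsq.sqrt
  refine tendsto_nhdsWithin_iff.2 ⟨hsqrt.congr' ?_, hd⟩
  filter_upwards [hd] with n hdn using Real.sqrt_sq hdn.le

/-- **Asymptotics of `b`** (formula (20) of the paper): as `d → 0⁺`,
`b(d) = 2ζ(2)·d⁻³ + O(d⁻²)` (with `ζ(2) = π²/6`); in particular, along the saddle points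
`d_n` solving `a(d) = n`, `b(d_n) ∼ (2√6/π)·n^{3/2}` as `n → ∞`. -/
theorem bFun_asymptotics (d : ℕ → ℝ)
    (hd : ∀ n : ℕ, 0 < n → 0 < d n ∧ aFun (d n) = n) :
    ((fun t : ℝ => bFun t - 2 * (Real.pi ^ 2 / 6) / t ^ 3)
        =O[nhdsWithin 0 (Set.Ioi 0)] (fun t : ℝ => 1 / t ^ 2))
      ∧ Asymptotics.IsEquivalent atTop
          (fun n : ℕ => bFun (d n))
          (fun n : ℕ => (2 * Real.sqrt 6 / Real.pi) * (n : ℝ) ^ ((3 : ℝ) / 2)) := by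
  have hpos : ∀ᶠ n in atTop, 0 < d n := by
    filter_upwards [eventually_gt_atTop 0] with n hn using (hd n hn).1
  have haFun : (fun n => aFun (d n)) =ᶠ[atTop] fun n : ℕ => (n : ℝ) := by
    filter_upwards [eventually_gt_atTop 0] with n hn using (hd n hn).2
  have hzero : Tendsto d atTop (𝓝[>] 0) :=
    tendsto_nhdsGT_zero_of_aFun_tendsto_atTop hpos
      (tendsto_natCast_atTop_atTop.congr' haFun.symm)
  refine ⟨isBigO_bFun_sub, (isEquivalent_bFun_aFun_rpow.comp_tendsto hzero).congr_right ?_⟩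
  filter_upwards [haFun] with n hn
  simp only [Function.comp_apply, hn]
end
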